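/- arXiv:1101.4522 — 8 statements merged into one kernel-verified Lean document; each statement's English description precedes it below -/
import Mathlib

section
/- For every integer d ≥ 2, the entanglement of formation of the antisymmetric state satisfies E_F(α_d) = 1 (with the bipartition being the two tensor factors of ℂ^d ⊗ ℂ^d). -/
open scoped BigOperators
open Classical
open scoped ComplexOrder

noncomputable section

/-- Partial trace over the second tensor factor:
`(ptraceSnd M) a a' = ∑ b, M (a,b) (a',b)`. -/
def ptraceSnd {α β : Type*} [Fintype β] (M : Matrix (α × β) (α × β) ℂ) : Matrix α α ℂ :=
  Matrix.of fun a a' => ∑ b : β, M (a, b) (a', b)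

/-- Von Neumann entropy (in bits) of a matrix, via the eigenvalues of a Hermitian matrix
(with the convention `0 * log₂ 0 = 0`, automatic since `Real.logb 2 0 = 0`). -/
def vnEntropy {ι : Type*} [Fintype ι] [DecidableEq ι] (ρ : Matrix ι ι ℂ) : ℝ :=
  if h : ρ.IsHermitian then -∑ i, h.eigenvalues i * Real.logb 2 (h.eigenvalues i) else 0

/-- Entanglement of formation of a bipartite (density) matrix: the infimum of the average
entropy of entanglement over all finite pure-state ensembles for `ρ`. -/
def EoF {α β : Type*} [Fintype α] [DecidableEq α] [Fintype β] [DecidableEq β]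
    (ρ : Matrix (α × β) (α × β) ℂ) : ℝ :=
  sInf {E : ℝ | ∃ (k : ℕ) (p : Fin k → ℝ) (ψ : Fin k → (α × β → ℂ)),
    (∀ i, 0 ≤ p i) ∧ (∑ i, p i = 1) ∧
    (∀ i, ∑ x, Complex.normSq (ψ i x) = 1) ∧
    (∑ i, p i • Matrix.vecMulVec (ψ i) (star (ψ i)) = ρ) ∧
    E = ∑ i, p i * vnEntropy (ptraceSnd (Matrix.vecMulVec (ψ i) (star (ψ i))))}

/-- The antisymmetric projector `P₂^{(d)} = (1/2)(𝟙 - F)` on `ℂ^d ⊗ ℂ^d`. -/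
def asymProj (d : ℕ) : Matrix (Fin d × Fin d) (Fin d × Fin d) ℂ :=
  Matrix.of fun p q => (1 / 2 : ℂ) *
    ((if p.1 = q.1 ∧ p.2 = q.2 then 1 else 0) - (if p.1 = q.2 ∧ p.2 = q.1 then 1 else 0))

/-- The antisymmetric state `α_d = P₂^{(d)} / binom(d,2)`. -/
def antisymState (d : ℕ) : Matrix (Fin d × Fin d) (Fin d × Fin d) ℂ :=
  (1 / (Nat.choose d 2 : ℂ)) • asymProj d

/-- `α_d^{⊗n}`, viewed as a bipartite state on `((ℂ^d)^{⊗n})_A ⊗ ((ℂ^d)^{⊗n})_B`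
(the `n` first tensor factors grouped on the `A` side, the `n` second ones on the `B` side). -/
def alphaPow (d n : ℕ) :
    Matrix ((Fin n → Fin d) × (Fin n → Fin d)) ((Fin n → Fin d) × (Fin n → Fin d)) ℂ :=
  Matrix.of fun p q => ∏ i : Fin n, antisymState d (p.1 i, p.2 i) (q.1 i, q.2 i)

/-- `(P₂^{(d)})^{⊗n}`, viewed as an operator on `((ℂ^d)^{⊗n})_A ⊗ ((ℂ^d)^{⊗n})_B`
(the `n` first tensor factors grouped on the `A` side, the `n` second ones on the `B` side). -/
def asymPow (d n : ℕ) :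
    Matrix ((Fin n → Fin d) × (Fin n → Fin d)) ((Fin n → Fin d) × (Fin n → Fin d)) ℂ :=
  Matrix.of fun p q => ∏ i : Fin n, asymProj d (p.1 i, p.2 i) (q.1 i, q.2 i)

/-- The antisymmetrizer `P_k^{(d)} = (1/k!) ∑_{σ ∈ S_k} sgn(σ) U_σ` on `(ℂ^d)^{⊗k}`. -/
def asymProjK (d k : ℕ) : Matrix (Fin k → Fin d) (Fin k → Fin d) ℂ :=
  Matrix.of fun f g => (1 / (Nat.factorial k) : ℂ) *
    ∑ σ : Equiv.Perm (Fin k), ((Equiv.Perm.sign σ : ℤ) : ℂ) * (if f = g ∘ σ then 1 else 0)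

/-- Quantum conditional mutual information `I(A;B|E) = H(AE) + H(BE) - H(ABE) - H(E)`
(in bits) of a tripartite (density) matrix. -/
def condMutInfo {α β γ : Type*} [Fintype α] [DecidableEq α] [Fintype β] [DecidableEq β]
    [Fintype γ] [DecidableEq γ] (ρ : Matrix ((α × β) × γ) ((α × β) × γ) ℂ) : ℝ :=
  vnEntropy (Matrix.of fun p q : α × γ => ∑ b : β, ρ ((p.1, b), p.2) ((q.1, b), q.2))
  + vnEntropy (Matrix.of fun p q : β × γ => ∑ a : α, ρ ((a, p.1), p.2) ((a, q.1), q.2))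
  - vnEntropy ρ
  - vnEntropy (Matrix.of fun e e' : γ => ∑ a : α, ∑ b : β, ρ ((a, b), e) ((a, b), e'))

/-- Squashed entanglement: `E_sq(ρ_AB) = inf (1/2) I(A;B|E)` over all finite-dimensional
extensions `ρ_ABE` of `ρ_AB`. -/
def Esq {α β : Type*} [Fintype α] [DecidableEq α] [Fintype β] [DecidableEq β]
    (ρ : Matrix (α × β) (α × β) ℂ) : ℝ :=
  sInf {x : ℝ | ∃ (m : ℕ) (σ : Matrix ((α × β) × Fin m) ((α × β) × Fin m) ℂ),
    σ.PosSemidef ∧ σ.trace = 1 ∧ ptraceSnd σ = ρ ∧ x = (1 / 2) * condMutInfo σ}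

/-- The operator norm `‖·‖_∞` of a matrix, acting on Euclidean space. -/
def opNorm {ι : Type*} [Fintype ι] [DecidableEq ι] (M : Matrix ι ι ℂ) : ℝ :=
  ‖Matrix.toEuclideanCLM (𝕜 := ℂ) M‖

/-- A bipartite (density) matrix is separable if it is a finite convex combination of
product density matrices. -/
def IsSeparableMat {α β : Type*} [Fintype α] [Fintype β]
    (σ : Matrix (α × β) (α × β) ℂ) : Prop :=
  ∃ (k : ℕ) (p : Fin k → ℝ) (ρA : Fin k → Matrix α α ℂ) (ρB : Fin k → Matrix β β ℂ),
    (∀ i, 0 ≤ p i) ∧ (∑ i, p i = 1) ∧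
    (∀ i, (ρA i).PosSemidef) ∧ (∀ i, (ρA i).trace = 1) ∧
    (∀ i, (ρB i).PosSemidef) ∧ (∀ i, (ρB i).trace = 1) ∧
    σ = ∑ i, p i • Matrix.kroneckerMap (· * ·) (ρA i) (ρB i)


lemma aux_key {d : ℕ} (M : Fin d → Fin d → ℂ) (hM : ∀ a b, M a b = - M b a) (v : Fin d → ℂ)
    (hv : ∑ a, Complex.normSq (v a) = 1) :
    2 * ∑ b, Complex.normSq (∑ a, star (v a) * M a b) ≤ ∑ a, ∑ b, Complex.normSq (M a b) := by
  set w : Fin d → ℂ := fun b => ∑ a, star (v a) * M a b with hw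
  have hpt : ∀ a b, Complex.normSq (M a b - (v a * w b - v b * w a)) =
      Complex.normSq (M a b) - 2 * (star (v a) * M a b * star (w b)).re
        - 2 * (star (v b) * M b a * star (w a)).re
        + Complex.normSq (v a) * Complex.normSq (w b) + Complex.normSq (v b) * Complex.normSq (w a)
        - 2 * ((v a * star (w a)) * star (v b * star (w b))).re := by
    intro a b
    rw [hM b a]
    simp [Complex.normSq_apply]
    ring
  have h0 : 0 ≤ ∑ a, ∑ b, Complex.normSq (M a b - (v a * w b - v b * w a)) :=
    Finset.sum_nonneg fun a _ => Finset.sum_nonneg fun b _ => Complex.normSq_nonneg _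
  simp only [hpt, Finset.sum_add_distrib, Finset.sum_sub_distrib, ← Finset.mul_sum,
    ← Finset.sum_mul] at h0
  have hW : ∑ a, ∑ b, (star (v a) * M a b * star (w b)).re = ∑ b, Complex.normSq (w b) := by
    rw [Finset.sum_comm]
    refine Finset.sum_congr rfl fun b _ => ?_
    rw [← Complex.re_sum, ← Finset.sum_mul]
    change (w b * star (w b)).re = _
    simp [Complex.normSq_apply]
  have hW2 : ∑ a, ∑ b, (star (v b) * M b a * star (w a)).re = ∑ b, Complex.normSq (w b) := by
    rw [Finset.sum_comm]; exact hW
  have hX : ∑ a, ∑ b, ((v a * star (w a)) * star (v b * star (w b))).re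
      = Complex.normSq (∑ a, v a * star (w a)) := by
    simp_rw [← Complex.re_sum, ← Finset.mul_sum, ← Finset.sum_mul, ← star_sum]
    generalize ∑ a, v a * star (w a) = z
    simp [Complex.normSq_apply]
  rw [hW, hW2, hX, hv] at h0
  have := Complex.normSq_nonneg (∑ a, v a * star (w a))
  linarith

lemma aux_reduced {d : ℕ} (ψ : Fin d × Fin d → ℂ) :
    ptraceSnd (Matrix.vecMulVec ψ (star ψ)) =
      (Matrix.of fun a b => ψ (a, b)) * (Matrix.of fun a b => ψ (a, b)).conjTranspose := by
  ext a b
  simp [ptraceSnd, Matrix.vecMulVec_apply, Matrix.mul_apply]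

lemma aux_trace {d : ℕ} (ψ : Fin d × Fin d → ℂ) (hψ : ∑ x, Complex.normSq (ψ x) = 1)
    (h : (ptraceSnd (Matrix.vecMulVec ψ (star ψ))).IsHermitian) :
    ∑ i, h.eigenvalues i = 1 := by
  have h1 := h.trace_eq_sum_eigenvalues
  have h2 : (ptraceSnd (Matrix.vecMulVec ψ (star ψ))).trace = 1 := by
    simp only [Matrix.trace, Matrix.diag, ptraceSnd, Matrix.of_apply, Matrix.vecMulVec_apply,
      Pi.star_apply]
    rw [← Fintype.sum_prod_type' (f := fun a b => ψ (a, b) * star (ψ (a, b)))]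
    have : ∀ x, ψ x * star (ψ x) = (Complex.normSq (ψ x) : ℂ) := fun x => Complex.mul_conj _
    simp only [Prod.mk.eta, this]
    exact_mod_cast hψ
  rw [h2] at h1
  have h3 := congrArg Complex.re h1
  rw [Complex.re_sum] at h3
  simpa using h3.symm

lemma aux_eig_le {d : ℕ} (ψ : Fin d × Fin d → ℂ) (hψ : ∑ x, Complex.normSq (ψ x) = 1)
    (ha : ∀ a b, ψ (a, b) = - ψ (b, a))
    (h : (ptraceSnd (Matrix.vecMulVec ψ (star ψ))).IsHermitian) (i : Fin d) :
    h.eigenvalues i ≤ 1 / 2 := by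
  set v : Fin d → ℂ := fun a => h.eigenvectorBasis i a with hv
  have hn : ∑ a, Complex.normSq (v a) = 1 := by
    have := h.eigenvectorBasis.orthonormal.1 i
    have h2 : ‖h.eigenvectorBasis i‖ ^ 2 = 1 := by rw [this]; norm_num
    rw [EuclideanSpace.norm_sq_eq] at h2
    simpa [hv, Complex.normSq_eq_norm_sq] using h2
  have hk := aux_key (fun a b => ψ (a, b)) ha v hn
  rw [← Fintype.sum_prod_type' (f := fun a b => Complex.normSq (ψ (a, b)))] at hk
  simp only [Prod.mk.eta, hψ] at hk
  have he : h.eigenvalues i = ∑ b, Complex.normSq (∑ a, star (v a) * ψ (a, b)) := by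
    rw [h.eigenvalues_eq]
    have : star v ⬝ᵥ (ptraceSnd (Matrix.vecMulVec ψ (star ψ))).mulVec v
        = ((∑ b, Complex.normSq (∑ a, star (v a) * ψ (a, b)) : ℝ) : ℂ) := by
      rw [aux_reduced, ← Matrix.mulVec_mulVec, Matrix.dotProduct_mulVec, Complex.ofReal_sum]
      refine Finset.sum_congr rfl fun b _ => ?_
      rw [← Complex.mul_conj]
      congr 1
      simp [Matrix.mulVec, dotProduct, mul_comm]
    change RCLike.re (star v ⬝ᵥ (ptraceSnd (Matrix.vecMulVec ψ (star ψ))).mulVec v) = _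
    rw [this]; simp
  linarith

lemma aux_psd {d : ℕ} (ψ : Fin d × Fin d → ℂ) :
    (ptraceSnd (Matrix.vecMulVec ψ (star ψ))).PosSemidef := by
  rw [aux_reduced]; exact Matrix.posSemidef_self_mul_conjTranspose _

lemma aux_ent_ge {d : ℕ} (ψ : Fin d × Fin d → ℂ) (hψ : ∑ x, Complex.normSq (ψ x) = 1)
    (ha : ∀ a b, ψ (a, b) = - ψ (b, a)) :
    1 ≤ vnEntropy (ptraceSnd (Matrix.vecMulVec ψ (star ψ))) := by
  have h := (aux_psd ψ).isHermitian
  rw [vnEntropy, dif_pos h, ← aux_trace ψ hψ h, ← Finset.sum_neg_distrib]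
  refine Finset.sum_le_sum fun i _ => ?_
  have h1 := aux_eig_le ψ hψ ha h i
  have h0 := (aux_psd ψ).eigenvalues_nonneg i
  change 0 ≤ h.eigenvalues i at h0
  rcases h0.eq_or_lt with h0 | h0
  · simp [← h0]
  · have : Real.logb 2 (h.eigenvalues i) ≤ -1 := by
      rw [Real.logb_le_iff_le_rpow (by norm_num) h0, Real.rpow_neg_one]; linarith
    nlinarith

lemma aux_ent_eq {d : ℕ} (ψ : Fin d × Fin d → ℂ) (hψ : ∑ x, Complex.normSq (ψ x) = 1)
    (hs : (2 : ℂ) • (ptraceSnd (Matrix.vecMulVec ψ (star ψ)) * ptraceSnd (Matrix.vecMulVec ψ (star ψ)))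
      = ptraceSnd (Matrix.vecMulVec ψ (star ψ))) :
    vnEntropy (ptraceSnd (Matrix.vecMulVec ψ (star ψ))) = 1 := by
  have h := (aux_psd ψ).isHermitian
  rw [vnEntropy, dif_pos h, ← aux_trace ψ hψ h, ← Finset.sum_neg_distrib]
  refine Finset.sum_congr rfl fun i _ => ?_
  have hq : 2 * (h.eigenvalues i * h.eigenvalues i) = h.eigenvalues i := by
    have e := h.mulVec_eigenvectorBasis i
    have e2 := congrArg (fun A => Matrix.mulVec A (h.eigenvectorBasis i).ofLp) hs
    simp only [Matrix.smul_mulVec, ← Matrix.mulVec_mulVec, e, Matrix.mulVec_smul] at e2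
    have hne : h.eigenvectorBasis i ≠ 0 := h.eigenvectorBasis.orthonormal.ne_zero i
    have : ∃ a, h.eigenvectorBasis i a ≠ 0 := by
      by_contra hc
      push Not at hc
      exact hne (by ext a; simpa using hc a)
    obtain ⟨a, hna⟩ := this
    have e3 := congrFun e2 a
    simp only [Pi.smul_apply, Complex.real_smul, smul_eq_mul] at e3
    have e4 : (2 * ((h.eigenvalues i : ℂ) * h.eigenvalues i)) = h.eigenvalues i := by
      apply mul_right_cancel₀ hna
      rw [← e3]; ring
    exact_mod_cast e4
  rcases eq_or_ne (h.eigenvalues i) 0 with h0 | h0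
  · simp [h0]
  · have : h.eigenvalues i = 2⁻¹ := by
      have : 2 * h.eigenvalues i = 1 := by
        apply mul_right_cancel₀ h0; linarith
      linarith
    rw [this, Real.logb_inv, Real.logb_self_eq_one (by norm_num)]; norm_num

lemma aux_anti {d k : ℕ} (p : Fin k → ℝ) (ψ : Fin k → (Fin d × Fin d → ℂ)) (hp : ∀ i, 0 ≤ p i)
    (hρ : ∑ i, p i • Matrix.vecMulVec (ψ i) (star (ψ i)) = antisymState d) (i : Fin k)
    (hi : 0 < p i) (a b : Fin d) : ψ i (a, b) = - ψ i (b, a) := by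
  have hE : ∀ x y, ∑ i, (p i : ℂ) * (ψ i x * star (ψ i y)) = antisymState d x y := by
    intro x y
    rw [← hρ]
    simp [Matrix.sum_apply, Matrix.vecMulVec_apply]
  have h1 : ∑ i, p i * Complex.normSq (ψ i (a, b) + ψ i (b, a)) = 0 := by
    have : ((∑ i, p i * Complex.normSq (ψ i (a, b) + ψ i (b, a)) : ℝ) : ℂ) =
      antisymState d (a, b) (a, b) + antisymState d (a, b) (b, a) + antisymState d (b, a) (a, b)
        + antisymState d (b, a) (b, a) := by
      simp only [← hE, ← Finset.sum_add_distrib]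
      push_cast
      refine Finset.sum_congr rfl fun i _ => ?_
      rw [← Complex.mul_conj]
      simp only [map_add, Complex.star_def]
      ring
    have h2 : antisymState d (a, b) (a, b) + antisymState d (a, b) (b, a)
      + antisymState d (b, a) (a, b) + antisymState d (b, a) (b, a) = 0 := by
      simp only [antisymState, asymProj, Matrix.smul_apply, Matrix.of_apply, smul_eq_mul]
      by_cases hab : a = b
      · subst hab; simp
      · have hba : ¬ b = a := fun h => hab h.symm
        simp [hab, hba]
    rw [h2] at this
    exact_mod_cast this
  rw [Finset.sum_eq_zero_iff_of_nonneg
    (fun i _ => mul_nonneg (hp i) (Complex.normSq_nonneg _))] at h1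
  have h2 := h1 i (Finset.mem_univ _)
  have h3 := (mul_eq_zero.1 h2).resolve_left hi.ne'
  exact eq_neg_of_add_eq_zero_left (Complex.normSq_eq_zero.1 h3)

/-- The singlet vectors (basis product vectors on the diagonal). -/
def auxPsi (d : ℕ) (q : Fin d × Fin d) : Fin d × Fin d → ℂ := fun x =>
  if q.1 = q.2 then (if x = q then 1 else 0)
  else ((Real.sqrt 2)⁻¹ : ℝ) * ((if x = q then 1 else 0) - (if x = q.swap then 1 else 0))

lemma aux_sqrt : (((Real.sqrt 2)⁻¹ : ℝ) : ℂ) * (((Real.sqrt 2)⁻¹ : ℝ) : ℂ) = 1 / 2 := by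
  rw [← Complex.ofReal_mul, ← mul_inv, Real.mul_self_sqrt (by norm_num)]; norm_num

lemma aux_norm (d : ℕ) (q : Fin d × Fin d) : ∑ x, Complex.normSq (auxPsi d q x) = 1 := by
  by_cases h : q.1 = q.2
  · simp [auxPsi, h, apply_ite Complex.normSq]
  · have hne : q ≠ q.swap := fun e => h (congrArg Prod.fst e)
    have : ∀ x, Complex.normSq (auxPsi d q x) =
        (1 / 2) * ((if x = q then 1 else 0) + (if x = q.swap then 1 else 0)) := by
      intro x
      simp only [auxPsi, h, if_false, map_mul, Complex.normSq_ofReal]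
      rw [← mul_inv, Real.mul_self_sqrt (by norm_num)]
      by_cases h1 : x = q
      · have : ¬ x = q.swap := fun e => hne (h1 ▸ e)
        simp only [h1, hne]; norm_num
      · by_cases h2 : x = q.swap
        · simp only [h2, hne.symm]; norm_num
        · simp [h1, h2]
    simp only [this, ← Finset.mul_sum, Finset.sum_add_distrib]
    norm_num

lemma aux_red_psi (d : ℕ) (q : Fin d × Fin d) (h : q.1 ≠ q.2) :
    ptraceSnd (Matrix.vecMulVec (auxPsi d q) (star (auxPsi d q))) =
      Matrix.diagonal fun a => if a = q.1 ∨ a = q.2 then (1 / 2 : ℂ) else 0 := by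
  obtain ⟨s, t⟩ := q
  simp only at h
  have h' := h.symm
  ext a b
  simp only [ptraceSnd, Matrix.of_apply, Matrix.vecMulVec_apply, Pi.star_apply, auxPsi, h, if_false,
    Matrix.diagonal_apply, Prod.mk.injEq, Prod.swap_prod_mk, star_mul', Complex.star_def,
    Complex.conj_ofReal]
  have e : ∀ x y : ℂ, (((Real.sqrt 2)⁻¹ : ℝ) : ℂ) * x * ((((Real.sqrt 2)⁻¹ : ℝ) : ℂ) * y) =
      1 / 2 * (x * y) := by
    intro x y; rw [← aux_sqrt]; ring
  simp only [e, ← Finset.mul_sum]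
  have e2 : ∀ c : Fin d, ((if a = s ∧ c = t then (1:ℂ) else 0) - (if a = t ∧ c = s then 1 else 0)) *
      (starRingEnd ℂ) ((if b = s ∧ c = t then (1:ℂ) else 0) - (if b = t ∧ c = s then 1 else 0)) =
      (if c = t then (if a = s ∧ b = s then 1 else 0) else 0) +
      (if c = s then (if a = t ∧ b = t then 1 else 0) else 0) := by
    intro c
    by_cases h1 : c = t
    · subst h1
      by_cases h2 : a = s <;> by_cases h3 : b = s <;> simp [h2, h3, h, h']
    · by_cases h4 : c = s
      · subst h4
        by_cases h2 : a = t <;> by_cases h3 : b = t <;> simp [h2, h3, h, h']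
      · simp [h1, h4]
  simp only [e2, Finset.sum_add_distrib, Finset.sum_ite_eq', Finset.mem_univ, if_true]
  by_cases hab : a = b
  · subst hab
    by_cases h2 : a = s
    · subst h2; simp [h]
    · by_cases h3 : a = t <;> simp [h2, h3, h']
  · by_cases h2 : a = s
    · subst h2
      have : ¬ b = a := fun e => hab e.symm
      simp [hab, this, h]
    · by_cases h3 : a = t
      · subst h3
        have : ¬ b = a := fun e => hab e.symm
        simp [hab, this, h2]
      · simp [h2, h3]

lemma aux_ent_psi (d : ℕ) (q : Fin d × Fin d) (h : q.1 ≠ q.2) :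
    vnEntropy (ptraceSnd (Matrix.vecMulVec (auxPsi d q) (star (auxPsi d q)))) = 1 := by
  apply aux_ent_eq _ (aux_norm d q)
  rw [aux_red_psi d q h, Matrix.diagonal_mul_diagonal]
  ext a b
  simp only [Matrix.smul_apply, Matrix.diagonal_apply, smul_eq_mul]
  split_ifs <;> norm_num

/-- The uniform weights on off-diagonal pairs. -/
def auxP (d : ℕ) (q : Fin d × Fin d) : ℝ :=
  if q.1 = q.2 then 0 else ((d : ℝ) * (d - 1))⁻¹

lemma aux_sum_p (d : ℕ) (hd : 2 ≤ d) : ∑ q, auxP d q = 1 := by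
  have hd' : (2 : ℝ) ≤ d := by exact_mod_cast hd
  have : ∀ a b : Fin d, auxP d (a, b) =
      ((d : ℝ) * (d - 1))⁻¹ - (if a = b then ((d : ℝ) * (d - 1))⁻¹ else 0) := by
    intro a b; simp only [auxP]; split_ifs <;> simp
  rw [Fintype.sum_prod_type]
  simp only [this, Finset.sum_sub_distrib, Finset.sum_ite_eq, Finset.mem_univ, if_true,
    Finset.sum_const, Finset.card_univ, Fintype.card_fin, nsmul_eq_mul]
  have h1 : (d : ℝ) ≠ 0 := by linarith
  have h2 : (d : ℝ) - 1 ≠ 0 := by linarith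
  field_simp

lemma aux_rho (d : ℕ) (hd : 2 ≤ d) :
    ∑ q, auxP d q • Matrix.vecMulVec (auxPsi d q) (star (auxPsi d q)) = antisymState d := by
  have hd' : (2 : ℝ) ≤ d := by exact_mod_cast hd
  ext x y
  have e : ∀ q, (auxP d q • Matrix.vecMulVec (auxPsi d q) (star (auxPsi d q))) x y =
      (((d : ℝ) * (d - 1))⁻¹ : ℝ) * (1 / 2) *
        (((if x = q then 1 else 0) - (if x.swap = q then 1 else 0)) *
          ((if y = q then 1 else 0) - (if y.swap = q then 1 else 0))) := by
    intro q
    have hsw : ∀ z : Fin d × Fin d, (z = q.swap) = (z.swap = q) := by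
      intro z; apply propext; constructor
      · rintro rfl; simp
      · rintro rfl; simp
    by_cases h : q.1 = q.2
    · have hq : q.swap = q := Prod.ext h.symm h
      simp only [← hsw, hq]
      simp [auxP, h]
    · simp only [Matrix.smul_apply, auxP, h, if_false, Matrix.vecMulVec_apply, Pi.star_apply,
        auxPsi, star_mul', Complex.star_def, Complex.conj_ofReal, Complex.real_smul, map_sub,
        apply_ite (starRingEnd ℂ), map_one, map_zero, hsw, ← aux_sqrt]
      ring
  rw [Matrix.sum_apply, Finset.sum_congr rfl fun q _ => e q, ← Finset.mul_sum]
  have e3 : ∑ q, (((if x = q then (1:ℂ) else 0) - (if x.swap = q then 1 else 0)) *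
          ((if y = q then 1 else 0) - (if y.swap = q then 1 else 0))) =
      2 * ((if x = y then 1 else 0) - (if x = y.swap then 1 else 0)) := by
    simp only [sub_mul, ite_mul, one_mul, zero_mul, Finset.sum_sub_distrib, Finset.sum_ite_eq,
      Finset.mem_univ, if_true]
    have h1 : (y = x.swap) = (x = y.swap) := by
      apply propext; constructor
      · rintro rfl; simp
      · rintro rfl; simp
    have h2 : (y.swap = x.swap) = (x = y) := by
      apply propext; rw [Prod.swap_inj]; exact eq_comm
    have h3 : (y = x) = (x = y) := propext eq_comm
    have h4 : (y.swap = x) = (x = y.swap) := propext eq_comm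
    simp only [h1, h2, h3, h4]; ring
  rw [e3]
  simp only [antisymState, asymProj, Matrix.smul_apply, Matrix.of_apply, smul_eq_mul, Prod.ext_iff,
    Prod.fst_swap, Prod.snd_swap, Nat.cast_choose_two]
  push_cast
  have h1 : (d : ℂ) ≠ 0 := by
    have : (d : ℝ) ≠ 0 := by linarith
    exact_mod_cast this
  have h2 : (d : ℂ) - 1 ≠ 0 := by
    have : (d : ℝ) - 1 ≠ 0 := by linarith
    exact_mod_cast this
  field_simp

/-- For every integer `d ≥ 2`, `E_F(α_d) = 1`. -/
theorem EoF_antisymState (d : ℕ) (hd : 2 ≤ d) :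
    EoF (antisymState d) = 1 := by
  apply IsLeast.csInf_eq
  constructor
  · let φ := (Fintype.equivFin (Fin d × Fin d)).symm
    refine ⟨_, fun i => auxP d (φ i), fun i => auxPsi d (φ i), ?_, ?_, ?_, ?_, ?_⟩
    · intro i
      have hd' : (2 : ℝ) ≤ d := by exact_mod_cast hd
      simp only [auxP]
      split_ifs
      · exact le_rfl
      · exact inv_nonneg.2 (mul_nonneg (by linarith) (by linarith))
    · rw [φ.sum_comp (auxP d)]; exact aux_sum_p d hd
    · intro i; exact aux_norm d _
    · rw [φ.sum_comp (fun q => auxP d q • Matrix.vecMulVec (auxPsi d q) (star (auxPsi d q)))]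
      exact aux_rho d hd
    · rw [φ.sum_comp (fun q => auxP d q *
        vnEntropy (ptraceSnd (Matrix.vecMulVec (auxPsi d q) (star (auxPsi d q))))),
        ← aux_sum_p d hd]
      refine Finset.sum_congr rfl fun q _ => ?_
      by_cases h : q.1 = q.2
      · simp [auxP, h]
      · rw [aux_ent_psi d q h, mul_one]
  · rintro E ⟨k, p, ψ, hp, hs, hn, hρ, rfl⟩
    rw [← hs]
    refine Finset.sum_le_sum fun i _ => ?_
    rcases (hp i).eq_or_lt with h | h
    · simp [← h]
    · have := aux_ent_ge (ψ i) (hn i) (aux_anti p ψ hp hρ i h)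
      nlinarith

end
end

section
/- For integers 2 ≤ d ≤ d' and n ≥ 1, E_F(α_{d'}^{⊗n}) ≤ E_F(α_d^{⊗n}); that is, the entanglement of formation of n copies of the antisymmetric state is non-increasing in the local dimension d (bipartition grouping all first tensor factors versus all second tensor factors). -/
open scoped BigOperators
open Classical
open scoped ComplexOrder

noncomputable section

open Matrix in
lemma aux_entropy_roots {ι : Type*} [Fintype ι] [DecidableEq ι] {ρ : Matrix ι ι ℂ}
    (h : ρ.IsHermitian) :
    vnEntropy ρ = -(ρ.charpoly.roots.map (fun z : ℂ => z.re * Real.logb 2 z.re)).sum := by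
  rw [vnEntropy, dif_pos h, h.roots_charpoly_eq_eigenvalues, Multiset.map_map]
  rfl

open Matrix in
lemma aux_entropy_isometry {ι κ : Type*} [Fintype ι] [DecidableEq ι] [Fintype κ] [DecidableEq κ]
    {ρ : Matrix ι ι ℂ} (h : ρ.IsHermitian) (V : Matrix κ ι ℂ) (hV : Vᴴ * V = 1) :
    vnEntropy (V * ρ * Vᴴ) = vnEntropy ρ := by
  have h' : (V * ρ * Vᴴ).IsHermitian := by
    simpa using isHermitian_mul_mul_conjTranspose V h
  rw [aux_entropy_roots h, aux_entropy_roots h']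
  have e := charpoly_mul_comm' V (ρ * Vᴴ)
  rw [Matrix.mul_assoc ρ, hV, Matrix.mul_one, ← Matrix.mul_assoc] at e
  have e2 := congrArg (fun p : Polynomial ℂ =>
    (p.roots.map (fun z : ℂ => z.re * Real.logb 2 z.re)).sum) e
  have n1 : ∀ n : ℕ, (Polynomial.X : Polynomial ℂ) ^ n ≠ 0 := fun n =>
    pow_ne_zero _ Polynomial.X_ne_zero
  beta_reduce at e2
  rw [Polynomial.roots_mul (mul_ne_zero (n1 _) (charpoly_monic _).ne_zero),
    Polynomial.roots_mul (mul_ne_zero (n1 _) (charpoly_monic _).ne_zero)] at e2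
  simp [Multiset.map_nsmul, Multiset.sum_nsmul] at e2
  rw [e2]

/-- The coefficient matrix of a bipartite vector. -/
def auxM {α β : Type*} (ψ : α × β → ℂ) : Matrix α β ℂ := Matrix.of fun a b => ψ (a, b)

open Matrix in
lemma aux_ptrace {α β : Type*} [Fintype β] (ψ : α × β → ℂ) :
    ptraceSnd (vecMulVec ψ (star ψ)) = auxM ψ * (auxM ψ)ᴴ := by
  ext a a'
  simp [ptraceSnd, auxM, mul_apply, vecMulVec_apply]

open Matrix in
lemma aux_norm_s7 {α β : Type*} [Fintype α] [Fintype β] (ψ : α × β → ℂ) :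
    ((∑ x, Complex.normSq (ψ x) : ℝ) : ℂ) = (auxM ψ * (auxM ψ)ᴴ).trace := by
  simp [Matrix.trace, auxM, mul_apply, Fintype.sum_prod_type, Complex.mul_conj]

open Matrix in
lemma aux_entropy_nonneg {α β : Type*} [Fintype α] [DecidableEq α] [Fintype β]
    (ψ : α × β → ℂ) (hψ : ∑ x, Complex.normSq (ψ x) = 1) :
    0 ≤ vnEntropy (ptraceSnd (vecMulVec ψ (star ψ))) := by
  rw [aux_ptrace]
  have hp := posSemidef_self_mul_conjTranspose (auxM ψ)
  have ht := aux_norm_s7 ψ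
  rw [hψ, hp.isHermitian.trace_eq_sum_eigenvalues] at ht
  have ht' : (1 : ℝ) = ∑ i, hp.isHermitian.eigenvalues i := by
    have := congrArg Complex.re ht
    simpa using this
  rw [vnEntropy, dif_pos hp.isHermitian, neg_nonneg]
  refine Finset.sum_nonpos fun i _ => ?_
  have h0 := hp.eigenvalues_nonneg i
  have h1 : hp.isHermitian.eigenvalues i ≤ 1 := by
    rw [ht']
    exact Finset.single_le_sum (f := hp.isHermitian.eigenvalues)
      (fun j _ => hp.eigenvalues_nonneg j) (Finset.mem_univ i)
  exact mul_nonpos_of_nonneg_of_nonpos h0 (Real.logb_nonpos (by norm_num) h0 h1)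

/-- Ensemble averages. -/
def auxSet {α β : Type*} [Fintype α] [DecidableEq α] [Fintype β] [DecidableEq β]
    (ρ : Matrix (α × β) (α × β) ℂ) : Set ℝ :=
  {E : ℝ | ∃ (k : ℕ) (p : Fin k → ℝ) (ψ : Fin k → (α × β → ℂ)),
    (∀ i, 0 ≤ p i) ∧ (∑ i, p i = 1) ∧
    (∀ i, ∑ x, Complex.normSq (ψ i x) = 1) ∧
    (∑ i, p i • Matrix.vecMulVec (ψ i) (star (ψ i)) = ρ) ∧
    E = ∑ i, p i * vnEntropy (ptraceSnd (Matrix.vecMulVec (ψ i) (star (ψ i))))}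

lemma auxSet_bdd {α β : Type*} [Fintype α] [DecidableEq α] [Fintype β] [DecidableEq β]
    (ρ : Matrix (α × β) (α × β) ℂ) : BddBelow (auxSet ρ) := by
  refine ⟨0, ?_⟩
  rintro E ⟨k, p, ψ, hp, -, hn, -, rfl⟩
  exact Finset.sum_nonneg fun i _ => mul_nonneg (hp i) (aux_entropy_nonneg _ (hn i))

lemma auxSet_intro {α β : Type*} [Fintype α] [DecidableEq α] [Fintype β] [DecidableEq β]
    {ρ : Matrix (α × β) (α × β) ℂ} {ι : Type*} [Fintype ι] (p : ι → ℝ) (ψ : ι → (α × β → ℂ))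
    (h0 : ∀ i, 0 ≤ p i) (h1 : ∑ i, p i = 1)
    (h2 : ∀ i, ∑ x, Complex.normSq (ψ i x) = 1)
    (h3 : ∑ i, p i • Matrix.vecMulVec (ψ i) (star (ψ i)) = ρ) :
    ∑ i, p i * vnEntropy (ptraceSnd (Matrix.vecMulVec (ψ i) (star (ψ i)))) ∈ auxSet ρ := by
  let e := (Fintype.equivFin ι).symm
  refine ⟨Fintype.card ι, p ∘ e, ψ ∘ e, fun i => h0 _, ?_, fun i => h2 _, ?_, ?_⟩
  · rw [← h1]; exact e.sum_comp p
  · rw [← h3]; exact e.sum_comp (fun i => p i • Matrix.vecMulVec (ψ i) (star (ψ i)))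
  · exact (e.sum_comp (fun i => p i * vnEntropy (ptraceSnd (Matrix.vecMulVec (ψ i) (star (ψ i)))))).symm

open Matrix Kronecker in
lemma aux_push {α γ : Type*} [Fintype α] [Fintype γ]
    (V : Matrix γ α ℂ) (ψ : α × α → ℂ) :
    auxM ((V ⊗ₖ V) *ᵥ ψ) = V * auxM ψ * Vᵀ := by
  ext a b
  simp only [auxM, of_apply, mulVec, dotProduct, kroneckerMap_apply, mul_apply, transpose_apply,
    Fintype.sum_prod_type, Finset.sum_mul]
  rw [Finset.sum_comm]
  refine Finset.sum_congr rfl fun x _ => Finset.sum_congr rfl fun y _ => by ring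

open Matrix Kronecker in
lemma aux_push2 {α γ : Type*} [Fintype α] [DecidableEq α] [Fintype γ]
    (V : Matrix γ α ℂ) (hV : Vᴴ * V = 1) (hr : Vᴴ = Vᵀ) (ψ : α × α → ℂ) :
    auxM ((V ⊗ₖ V) *ᵥ ψ) * (auxM ((V ⊗ₖ V) *ᵥ ψ))ᴴ = V * (auxM ψ * (auxM ψ)ᴴ) * Vᴴ := by
  rw [aux_push, ← hr, conjTranspose_mul, conjTranspose_mul, conjTranspose_conjTranspose]
  calc _ = V * (auxM ψ * (Vᴴ * V) * (auxM ψ)ᴴ) * Vᴴ := by simp only [Matrix.mul_assoc]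
    _ = _ := by rw [hV, Matrix.mul_one]

open Matrix Kronecker in
/-- Mixing local isometries does not change the ensemble averages. -/
lemma auxSet_mix {α γ : Type*} [Fintype α] [DecidableEq α] [Fintype γ] [DecidableEq γ]
    {J : Type*} [Fintype J] (V : J → Matrix γ α ℂ) (hV : ∀ j, (V j)ᴴ * V j = 1)
    (hr : ∀ j, (V j)ᴴ = (V j)ᵀ) (w : J → ℝ) (hw : ∀ j, 0 ≤ w j) (hw1 : ∑ j, w j = 1)
    (ρ : Matrix (α × α) (α × α) ℂ) (ρ' : Matrix (γ × γ) (γ × γ) ℂ)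
    (hρ : ∑ j, w j • ((V j ⊗ₖ V j) * ρ * (V j ⊗ₖ V j)ᴴ) = ρ') :
    auxSet ρ ⊆ auxSet ρ' := by
  rintro E ⟨k, p, ψ, hp, hp1, hn, hs, rfl⟩
  have key := auxSet_intro (ρ := ρ') (ι := J × Fin k) (fun x => w x.1 * p x.2)
    (fun x => (V x.1 ⊗ₖ V x.1) *ᵥ ψ x.2) (fun x => mul_nonneg (hw _) (hp _)) ?_ ?_ ?_
  · convert key using 1
    simp only [aux_ptrace, aux_push2 _ (hV _) (hr _)]
    simp only [Fintype.sum_prod_type, aux_entropy_isometry (isHermitian_mul_conjTranspose_self _) _ (hV _)]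
    simp only [mul_assoc, ← Finset.mul_sum, ← Finset.sum_mul, hw1, one_mul]
  · simp only [Fintype.sum_prod_type, ← Finset.mul_sum, ← Finset.sum_mul, hw1, one_mul, hp1]
  · rintro ⟨j, i⟩
    have := aux_norm_s7 ((V j ⊗ₖ V j) *ᵥ ψ i)
    rw [aux_push2 _ (hV _) (hr _), trace_mul_comm, ← Matrix.mul_assoc, hV, Matrix.one_mul,
      ← aux_norm_s7, hn] at this
    exact_mod_cast this
  · rw [← hρ, Fintype.sum_prod_type]
    refine Finset.sum_congr rfl fun j _ => ?_
    rw [← hs, Matrix.mul_sum, Matrix.sum_mul, Finset.smul_sum]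
    refine Finset.sum_congr rfl fun i _ => ?_
    simp only [mul_smul]
    rw [star_mulVec, ← vecMulVec_mul, ← mul_vecMulVec, Matrix.mul_smul, Matrix.smul_mul]

/-- Single-site isometry matrix. -/
def auxK (d : ℕ) (j : Fin (d+1)) (p : Fin (d+1)) (x : Fin d) : ℂ :=
  if p = j.succAbove x then 1 else 0

lemma auxK_sum (d : ℕ) (j p : Fin (d+1)) : ∑ x, auxK d j p x = if p = j then 0 else 1 := by
  have := Fin.sum_univ_succAbove (fun y => if p = y then (1:ℂ) else 0) j
  simp only [Finset.sum_ite_eq, Finset.mem_univ, if_true] at this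
  simp only [auxK]
  split_ifs with h
  · subst h; simp
  · rw [if_neg h, zero_add] at this; exact this.symm

lemma aux_asym_succ (d : ℕ) (j : Fin (d+1)) (a b a' b' : Fin d) :
    asymProj d (a, b) (a', b') = asymProj (d+1) (j.succAbove a, j.succAbove b)
      (j.succAbove a', j.succAbove b') := by
  simp [asymProj]

lemma aux_count (d : ℕ) (hd : 2 ≤ d) (p q : Fin (d+1)) (h : p ≠ q) :
    ∑ j : Fin (d+1), (if p = j then 0 else 1) * (if q = j then (0:ℂ) else 1) = (d:ℂ) - 1 := by
  have : ∀ j : Fin (d+1), (if p = j then 0 else 1) * (if q = j then (0:ℂ) else 1)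
      = 1 - (if p = j then 1 else 0) - (if q = j then 1 else 0) := by
    intro j
    by_cases h1 : p = j
    · have : q ≠ j := fun h2 => h (h1.trans h2.symm)
      simp [h1, this]
    · by_cases h2 : q = j <;> simp [h1, h2]
  simp only [this, Finset.sum_sub_distrib]
  simp

lemma aux_site (d : ℕ) (hd : 2 ≤ d) (p1 p2 q1 q2 : Fin (d+1)) :
    ∑ j, ∑ x1, ∑ x2, ∑ y1, ∑ y2, (1 / ((d:ℂ)+1)) * (auxK d j p1 x1 * auxK d j p2 x2 *
      auxK d j q1 y1 * auxK d j q2 y2 * antisymState d (x1, x2) (y1, y2))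
      = antisymState (d+1) (p1, p2) (q1, q2) := by
  have h1 : ∀ j x1 x2 y1 y2, (1 / ((d:ℂ)+1)) * (auxK d j p1 x1 * auxK d j p2 x2 *
      auxK d j q1 y1 * auxK d j q2 y2 * antisymState d (x1, x2) (y1, y2))
      = (1 / ((d:ℂ)+1) * (1 / (Nat.choose d 2 : ℂ))) * asymProj (d+1) (p1,p2) (q1,q2) *
        (auxK d j p1 x1 * (auxK d j p2 x2 * (auxK d j q1 y1 * auxK d j q2 y2))) := by
    intro j x1 x2 y1 y2
    rw [antisymState, Matrix.smul_apply, aux_asym_succ d j, smul_eq_mul]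
    simp only [auxK]
    split_ifs with a b c e <;> subst_vars <;> simp
    ring
  simp only [h1, ← Finset.mul_sum, ← Finset.sum_mul, auxK_sum]
  have hch : ∀ m : ℕ, ((m.choose 2 : ℕ) : ℂ) = m * (m - 1) / 2 := fun m => Nat.cast_choose_two ℂ m
  have hz : (d:ℂ) ≠ 0 := by exact_mod_cast (by omega : d ≠ 0)
  have hz1 : (d:ℂ) - 1 ≠ 0 := by
    rw [sub_ne_zero]; exact_mod_cast (by omega : d ≠ 1)
  have hz2 : (d:ℂ) + 1 ≠ 0 := by exact_mod_cast (by omega : d + 1 ≠ 0)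
  by_cases hP : asymProj (d+1) (p1,p2) (q1,q2) = 0
  · simp [antisymState, hP]
  · have hne : p1 ≠ p2 ∧ ((p1 = q1 ∧ p2 = q2) ∨ (p1 = q2 ∧ p2 = q1)) := by
      constructor
      · rintro rfl
        apply hP
        simp only [asymProj, Matrix.of_apply]
        simp [and_comm]
      · by_contra hc
        push Not at hc
        apply hP
        have c1 : ¬ (p1 = q1 ∧ p2 = q2) := fun h => hc.1 h.1 h.2
        have c2 : ¬ (p1 = q2 ∧ p2 = q1) := fun h => hc.2 h.1 h.2
        simp only [asymProj, Matrix.of_apply, c1, c2]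
        simp
    have hs : ∑ j : Fin (d+1), ((if p1 = j then (0:ℂ) else 1) * ((if p2 = j then 0 else 1) *
        ((if q1 = j then 0 else 1) * (if q2 = j then 0 else 1)))) = (d:ℂ) - 1 := by
      rw [← aux_count d hd p1 p2 hne.1]
      refine Finset.sum_congr rfl fun j _ => ?_
      obtain ⟨_, ⟨rfl, rfl⟩ | ⟨rfl, rfl⟩⟩ := hne <;> split_ifs <;> simp
    rw [hs, antisymState, Matrix.smul_apply, smul_eq_mul, hch, hch]
    push_cast
    rw [add_sub_cancel_right]
    field_simp

/-- The tensor-product isometry. -/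
def auxV (d n : ℕ) (J : Fin n → Fin (d+1)) : Matrix (Fin n → Fin (d+1)) (Fin n → Fin d) ℂ :=
  Matrix.of fun a x => ∏ i, auxK d (J i) (a i) (x i)

open Matrix in
lemma auxV_real (d n : ℕ) (J : Fin n → Fin (d+1)) : (auxV d n J)ᴴ = (auxV d n J)ᵀ := by
  ext a b
  simp only [auxV, conjTranspose_apply, transpose_apply, of_apply, star_prod]
  refine Finset.prod_congr rfl fun i _ => ?_
  simp only [auxK]; split_ifs <;> simp

open Matrix in
lemma auxV_iso (d n : ℕ) (J : Fin n → Fin (d+1)) : (auxV d n J)ᴴ * auxV d n J = 1 := by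
  rw [auxV_real]
  ext a b
  simp only [auxV, mul_apply, transpose_apply, of_apply, ← Finset.prod_mul_distrib]
  have := Finset.prod_univ_sum (fun _ : Fin n => (Finset.univ : Finset (Fin (d+1))))
    (fun i y => auxK d (J i) y (a i) * auxK d (J i) y (b i))
  rw [Fintype.piFinset_univ] at this
  rw [← this]
  simp only [auxK, mul_ite, mul_one, mul_zero, Matrix.one_apply]
  by_cases h : a = b
  · subst h; simp
  · obtain ⟨i, hi⟩ := Function.ne_iff.mp h
    rw [if_neg h]
    refine Finset.prod_eq_zero (Finset.mem_univ i) ?_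
    refine Finset.sum_eq_zero fun y _ => ?_
    split_ifs with h1 h2
    · exact absurd (Fin.succAbove_right_injective (h2.symm.trans h1)) hi
    all_goals rfl

lemma aux_prod_sum {n : ℕ} {K : Type*} [Fintype K] (f : Fin n → K → ℂ) :
    ∑ g : Fin n → K, ∏ i, f i (g i) = ∏ i, ∑ y, f i y := by
  rw [Finset.prod_univ_sum, Fintype.piFinset_univ]

open Matrix Kronecker in
lemma aux_mixture (d n : ℕ) (hd : 2 ≤ d) :
    ∑ J : Fin n → Fin (d+1), (1 / ((d:ℝ)+1)) ^ n • ((auxV d n J ⊗ₖ auxV d n J) * alphaPow d n *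
      (auxV d n J ⊗ₖ auxV d n J)ᴴ) = alphaPow (d+1) n := by
  ext ⟨p1, p2⟩ ⟨q1, q2⟩
  have hR : alphaPow (d+1) n (p1, p2) (q1, q2) =
      ∑ J : Fin n → Fin (d+1), ∑ x1 : Fin n → Fin d, ∑ x2 : Fin n → Fin d, ∑ y1 : Fin n → Fin d,
        ∑ y2 : Fin n → Fin d, ∏ i, ((1 / ((d:ℂ)+1)) * (auxK d (J i) (p1 i) (x1 i) *
        auxK d (J i) (p2 i) (x2 i) * auxK d (J i) (q1 i) (y1 i) * auxK d (J i) (q2 i) (y2 i) *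
        antisymState d (x1 i, x2 i) (y1 i, y2 i))) := by
    have e : ∀ (J : Fin n → Fin (d+1)) (x1 x2 y1 : Fin n → Fin d), _ := fun J x1 x2 y1 =>
      aux_prod_sum (fun (i : Fin n) (y2 : Fin d) => ((1 / ((d:ℂ)+1)) * (auxK d (J i) (p1 i) (x1 i) *
        auxK d (J i) (p2 i) (x2 i) * auxK d (J i) (q1 i) (y1 i) * auxK d (J i) (q2 i) y2 *
        antisymState d (x1 i, x2 i) (y1 i, y2))))
    have e2 : ∀ (J : Fin n → Fin (d+1)) (x1 x2 : Fin n → Fin d), _ := fun J x1 x2 =>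
      aux_prod_sum (fun (i : Fin n) (y1 : Fin d) => ∑ y2, ((1 / ((d:ℂ)+1)) * (auxK d (J i) (p1 i) (x1 i) *
        auxK d (J i) (p2 i) (x2 i) * auxK d (J i) (q1 i) y1 * auxK d (J i) (q2 i) y2 *
        antisymState d (x1 i, x2 i) (y1, y2))))
    have e3 : ∀ (J : Fin n → Fin (d+1)) (x1 : Fin n → Fin d), _ := fun J x1 =>
      aux_prod_sum (fun (i : Fin n) (x2 : Fin d) => ∑ y1, ∑ y2, ((1 / ((d:ℂ)+1)) * (auxK d (J i) (p1 i) (x1 i) *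
        auxK d (J i) (p2 i) x2 * auxK d (J i) (q1 i) y1 * auxK d (J i) (q2 i) y2 *
        antisymState d (x1 i, x2) (y1, y2))))
    have e4 : ∀ (J : Fin n → Fin (d+1)), _ := fun J =>
      aux_prod_sum (fun (i : Fin n) (x1 : Fin d) => ∑ x2, ∑ y1, ∑ y2, ((1 / ((d:ℂ)+1)) * (auxK d (J i) (p1 i) x1 *
        auxK d (J i) (p2 i) x2 * auxK d (J i) (q1 i) y1 * auxK d (J i) (q2 i) y2 *
        antisymState d (x1, x2) (y1, y2))))
    have e5 := 
      aux_prod_sum (fun (i : Fin n) (j : Fin (d+1)) => ∑ x1, ∑ x2, ∑ y1, ∑ y2, ((1 / ((d:ℂ)+1)) * (auxK d j (p1 i) x1 *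
        auxK d j (p2 i) x2 * auxK d j (q1 i) y1 * auxK d j (q2 i) y2 *
        antisymState d (x1, x2) (y1, y2))))
    simp only [e, e2, e3, e4, e5, aux_site d hd, alphaPow, Matrix.of_apply]
  rw [hR, Matrix.sum_apply]
  refine Finset.sum_congr rfl fun J _ => ?_
  have hreal : (auxV d n J ⊗ₖ auxV d n J)ᴴ = (auxV d n J)ᵀ ⊗ₖ (auxV d n J)ᵀ := by
    rw [conjTranspose_kronecker, auxV_real]
  rw [hreal, Matrix.mul_assoc, Matrix.smul_apply, Matrix.mul_apply, Finset.smul_sum,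
    Fintype.sum_prod_type]
  refine Finset.sum_congr rfl fun x1 _ => Finset.sum_congr rfl fun x2 _ => ?_
  rw [Matrix.mul_apply, Finset.mul_sum, Finset.smul_sum, Fintype.sum_prod_type]
  refine Finset.sum_congr rfl fun y1 _ => Finset.sum_congr rfl fun y2 _ => ?_
  simp only [kroneckerMap_apply, transpose_apply, auxV, of_apply, alphaPow,
    Finset.prod_mul_distrib, Finset.prod_const, Finset.card_univ, Fintype.card_fin,
    Complex.real_smul]
  push_cast
  ring

lemma auxSet_step (d n : ℕ) (hd : 2 ≤ d) :
    auxSet (alphaPow d n) ⊆ auxSet (alphaPow (d+1) n) := by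
  refine auxSet_mix (auxV d n) (auxV_iso d n) (auxV_real d n) (fun _ => (1 / ((d:ℝ)+1)) ^ n)
    (fun _ => by positivity) ?_ _ _ (aux_mixture d n hd)
  have : (d:ℝ) + 1 ≠ 0 := by positivity
  simp [this]

/-- The singlet amplitudes, normalised. -/
def auxT (a b : Fin 2) : ℂ :=
  (((Real.sqrt 2)⁻¹ : ℝ) : ℂ) * (if a = b then 0 else if a = 0 then 1 else -1)

lemma auxT_mul (a b a' b' : Fin 2) :
    auxT a b * star (auxT a' b') = antisymState 2 (a, b) (a', b') := by
  have h : (((Real.sqrt 2)⁻¹ : ℝ) : ℂ) * (((Real.sqrt 2)⁻¹ : ℝ) : ℂ) = 1/2 := by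
    rw [← Complex.ofReal_mul, ← mul_inv, Real.mul_self_sqrt (by norm_num)]; simp
  have h' : ∀ x y : ℂ, ((((Real.sqrt 2)⁻¹ : ℝ) : ℂ) * x) * star ((((Real.sqrt 2)⁻¹ : ℝ) : ℂ) * y)
      = 1/2 * (x * star y) := by
    intro x y
    rw [← h, star_mul', Complex.star_def, Complex.conj_ofReal]; ring
  rw [auxT, auxT, h']
  simp only [antisymState, asymProj, Matrix.smul_apply, Matrix.of_apply]
  fin_cases a <;> fin_cases b <;> fin_cases a' <;> fin_cases b' <;> simp

lemma auxSet_two (n : ℕ) : (auxSet (alphaPow 2 n)).Nonempty := by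
  refine ⟨_, auxSet_intro (ι := Unit) (fun _ => 1)
    (fun _ (x : (Fin n → Fin 2) × (Fin n → Fin 2)) => ∏ i, auxT (x.1 i) (x.2 i)) (by simp) (by simp) ?_ ?_⟩
  · intro _
    have : ((∑ x : (Fin n → Fin 2) × (Fin n → Fin 2),
        Complex.normSq (∏ i, auxT (x.1 i) (x.2 i)) : ℝ) : ℂ) = 1 := by
      have e : ∀ x : (Fin n → Fin 2) × (Fin n → Fin 2),
          ((Complex.normSq (∏ i, auxT (x.1 i) (x.2 i)) : ℝ) : ℂ) =
          ∏ i, antisymState 2 (x.1 i, x.2 i) (x.1 i, x.2 i) := by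
        intro x
        rw [← Complex.mul_conj, map_prod, ← Finset.prod_mul_distrib]
        exact Finset.prod_congr rfl fun i _ => auxT_mul _ _ _ _
      rw [Complex.ofReal_sum]
      simp only [e, Fintype.sum_prod_type]
      have e1 : ∀ a : Fin n → Fin 2, _ := fun a =>
        aux_prod_sum (fun (i : Fin n) (b : Fin 2) => antisymState 2 (a i, b) (a i, b))
      have e2 := aux_prod_sum (fun (i : Fin n) (a : Fin 2) =>
        ∑ b : Fin 2, antisymState 2 (a, b) (a, b))
      simp only [e1, e2]
      apply Finset.prod_eq_one
      intro i _
      simp [antisymState, asymProj]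
      norm_num
    exact_mod_cast this
  · ext p q
    simp only [Finset.univ_unique, Finset.sum_const, Finset.card_singleton, one_smul,
      Matrix.vecMulVec_apply, Pi.star_apply, star_prod, ← Finset.prod_mul_distrib, alphaPow,
      Matrix.of_apply, auxT_mul]

lemma auxSet_nonempty (d n : ℕ) (hd : 2 ≤ d) : (auxSet (alphaPow d n)).Nonempty := by
  induction d, hd using Nat.le_induction with
  | base => exact auxSet_two n
  | succ m hm ih => exact ih.mono (auxSet_step m n hm)

lemma auxSet_mono (d d' n : ℕ) (hd : 2 ≤ d) (hdd : d ≤ d') :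
    auxSet (alphaPow d n) ⊆ auxSet (alphaPow d' n) := by
  induction d', hdd using Nat.le_induction with
  | base => exact subset_rfl
  | succ m hm ih => exact ih.trans (auxSet_step m n (hd.trans hm))

/-- For integers `2 ≤ d ≤ d'` and `n ≥ 1`,
`E_F(α_{d'}^{⊗n}) ≤ E_F(α_d^{⊗n})`. -/
theorem EoF_alphaPow_antitone (d d' n : ℕ) (hd : 2 ≤ d) (hdd : d ≤ d') (hn : 1 ≤ n) :
    EoF (alphaPow d' n) ≤ EoF (alphaPow d n) := by
  exact csInf_le_csInf (auxSet_bdd _) (auxSet_nonempty d n hd) (auxSet_mono d d' n hd hdd)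

end
end

section
/- Let n ≥ 1 be an integer, let t : {0,1} → ℝ be given by t(0) = −1, t(1) = 1/2, and let T be the 2×2 real matrix with rows indexed by x ∈ {0,1} and columns by y ∈ {0,1} given by T(0,0) = −2, T(0,1) = 1, T(1,0) = 1, T(1,1) = 1. Then for every function p : {0,1}^n → ℝ satisfying (i) p(y) ≥ 0 for all y ∈ {0,1}^n, (ii) ∑_{y∈{0,1}^n} p(y) ≤ 1, and (iii) for all x ∈ {0,1}^n, ∑_{y∈{0,1}^n} (∏_{i=1}^n T(x_i, y_i)) p(y) ≥ 0, the objective value satisfies ∑_{y∈{0,1}^n} (∏_{i=1}^n t(y_i)) p(y) ≤ (3/4)^n. That is, the optimum ζ_n of this linear programme is at most (3/4)^n. -/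
open scoped BigOperators
open Classical
open scoped ComplexOrder

noncomputable section

/-- the optimum `ζ_n` of the two-symbol linear programme with constraint
matrix `T^{⊗n}` and objective `t^{⊗n}` is at most `(3/4)^n`. -/
theorem lp_value_le (n : ℕ) (hn : 1 ≤ n)
    (p : (Fin n → Fin 2) → ℝ)
    (hpos : ∀ y, 0 ≤ p y)
    (hsum : ∑ y, p y ≤ 1)
    (hconstr : ∀ x : Fin n → Fin 2,
      0 ≤ ∑ y, (∏ i, (!![(-2 : ℝ), 1; 1, 1]) (x i) (y i)) * p y) :
    ∑ y, (∏ i, (![(-1 : ℝ), 1 / 2]) (y i)) * p y ≤ (3 / 4 : ℝ) ^ n := by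
  set T : Matrix (Fin 2) (Fin 2) ℝ := !![(-2 : ℝ), 1; 1, 1] with hT
  set t : Fin 2 → ℝ := ![(-1 : ℝ), 1 / 2] with ht
  let c : Fin 2 → ℝ := ![1 / 2, 1 / 4]
  have hc : ∀ a, 0 ≤ c a := by
    intro a
    fin_cases a <;> norm_num [c]
  have ht0 : ∀ b, t b = c 0 * T 0 b := by
    intro b
    fin_cases b <;> norm_num [c, t, T]
  have hu : ∀ b, |∑ a, c a * T a b| = 3 / 4 := by
    intro b
    fin_cases b <;> norm_num [c, T, Fin.sum_univ_two, abs_of_pos, abs_of_neg]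
  have key : ∑ y, (∏ i, ∑ a, c a * T a (y i)) * p y
      = ∑ x : Fin n → Fin 2, (∏ i, c (x i)) * ∑ y, (∏ i, T (x i) (y i)) * p y := by
    have h1 : ∀ y : Fin n → Fin 2, (∏ i, ∑ a, c a * T a (y i))
        = ∑ x : Fin n → Fin 2, ∏ i, (c (x i) * T (x i) (y i)) :=
      fun y => Fintype.prod_sum (fun i a => c a * T a (y i))
    simp_rw [h1, Finset.sum_mul, Finset.mul_sum]
    rw [Finset.sum_comm]
    refine Finset.sum_congr rfl fun x _ => Finset.sum_congr rfl fun y _ => ?_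
    rw [Finset.prod_mul_distrib, mul_assoc]
  have hle : ∑ y, (∏ i, t (y i)) * p y
      ≤ ∑ x : Fin n → Fin 2, (∏ i, c (x i)) * ∑ y, (∏ i, T (x i) (y i)) * p y := by
    have h0 := Finset.single_le_sum
      (f := fun x : Fin n → Fin 2 => (∏ i, c (x i)) * ∑ y, (∏ i, T (x i) (y i)) * p y)
      (fun x _ => mul_nonneg (Finset.prod_nonneg fun i _ => hc _) (hconstr x))
      (Finset.mem_univ (fun _ => 0))
    refine le_trans (le_of_eq ?_) h0
    rw [Finset.mul_sum]
    refine Finset.sum_congr rfl fun y _ => ?_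
    simp_rw [ht0]
    rw [Finset.prod_mul_distrib, mul_assoc]
  rw [← key] at hle
  refine hle.trans ?_
  calc ∑ y, (∏ i, ∑ a, c a * T a (y i)) * p y
      ≤ ∑ y, (3 / 4 : ℝ) ^ n * p y := by
        refine Finset.sum_le_sum fun y _ => mul_le_mul_of_nonneg_right ?_ (hpos y)
        refine (le_abs_self _).trans (le_of_eq ?_)
        rw [Finset.abs_prod]
        simp only [hu, Finset.prod_const, Finset.card_univ, Fintype.card_fin]
    _ = (3 / 4 : ℝ) ^ n * ∑ y, p y := by rw [Finset.mul_sum]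
    _ ≤ (3 / 4 : ℝ) ^ n := mul_le_of_le_one_right (by positivity) hsum

end
end

section
/- For all integers n ≥ 1 and 0 ≤ m ≤ n, the following inequality holds: (−2)^m · 2^{−n} + ∑_{k=0}^{n−1} 2^{k−2n} · ( ∑_{ℓ=0}^{k} (−2)^ℓ · binom(m,ℓ) · binom(n−m, k−ℓ) ) ≤ (3/4)^n, where binom(a,b) := 0 whenever b > a. (This expresses that z = (3/4)^n together with δ_k = 2^{k−2n} for k < n and δ_n = 0 is a feasible point of the dual linear programme.) -/
open scoped BigOperators
open Classical
open scoped ComplexOrder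

noncomputable section

theorem dual_aux_coeff (n m k : ℕ) :
    ((((1 + Polynomial.X : Polynomial ℝ) ^ m).comp (Polynomial.C (-2) * Polynomial.X)) *
      (1 + Polynomial.X) ^ (n - m)).coeff k =
    ∑ l ∈ Finset.range (k + 1),
          (-2 : ℝ) ^ l * (Nat.choose m l) * (Nat.choose (n - m) (k - l)) := by
  rw [Polynomial.coeff_mul, Finset.Nat.sum_antidiagonal_eq_sum_range_succ_mk]
  refine Finset.sum_congr rfl fun l _ => ?_
  rw [Polynomial.comp_C_mul_X_coeff, Polynomial.coeff_one_add_X_pow,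
    Polynomial.coeff_one_add_X_pow]
  ring

theorem dual_aux_top (n m : ℕ) (hm : m ≤ n) :
    ∑ l ∈ Finset.range (n + 1),
      (-2 : ℝ) ^ l * (Nat.choose m l) * (Nat.choose (n - m) (n - l)) = (-2) ^ m := by
  rw [Finset.sum_eq_single m]
  · simp
  · intro l hl hne
    rw [Finset.mem_range] at hl
    rcases lt_or_gt_of_ne hne with h | h
    · rw [Nat.choose_eq_zero_of_lt (show n - m < n - l by omega)]; simp
    · rw [Nat.choose_eq_zero_of_lt h]; simp
  · intro h
    exact absurd (Finset.mem_range.mpr (by omega)) h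

theorem dual_aux_sum (n m : ℕ) (hm : m ≤ n) :
    ∑ k ∈ Finset.range (n + 1), (2 : ℝ) ^ k *
        (∑ l ∈ Finset.range (k + 1),
          (-2 : ℝ) ^ l * (Nat.choose m l) * (Nat.choose (n - m) (k - l)))
      = (-1) ^ m * 3 ^ n := by
  have hdeg : ((((1 + Polynomial.X : Polynomial ℝ) ^ m).comp
      (Polynomial.C (-2) * Polynomial.X)) *
      (1 + Polynomial.X) ^ (n - m)).natDegree < n + 1 := by
    have h1 : ((((1 + Polynomial.X : Polynomial ℝ) ^ m).comp
      (Polynomial.C (-2) * Polynomial.X)) *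
      (1 + Polynomial.X) ^ (n - m)).natDegree ≤ m * 1 + (n - m) * 1 := by
      rw [Polynomial.pow_comp]
      refine Polynomial.natDegree_mul_le_of_le (Polynomial.natDegree_pow_le_of_le _ ?_)
        (Polynomial.natDegree_pow_le_of_le _ ?_)
      · simp only [Polynomial.add_comp, Polynomial.one_comp, Polynomial.X_comp]
        compute_degree
      · compute_degree
    omega
  have h := Polynomial.eval_eq_sum_range' hdeg (2 : ℝ)
  simp only [dual_aux_coeff] at h
  rw [Finset.sum_congr rfl (fun k _ => mul_comm _ _), ← h]
  obtain ⟨d, rfl⟩ := Nat.exists_eq_add_of_le hm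
  simp only [Polynomial.eval_mul, Polynomial.eval_comp, Polynomial.eval_pow,
    Polynomial.eval_add, Polynomial.eval_one, Polynomial.eval_X, Polynomial.eval_C,
    Nat.add_sub_cancel_left]
  rw [pow_add, ← mul_assoc, ← mul_pow]
  norm_num

/-- the combinatorial inequality expressing that `z = (3/4)^n`, together
with `δ_k = 2^{k-2n}` for `k < n` and `δ_n = 0`, is dual feasible. -/
theorem dual_feasible_inequality (n m : ℕ) (hn : 1 ≤ n) (hm : m ≤ n) :
    (-2 : ℝ) ^ m / 2 ^ n +
      ∑ k ∈ Finset.range n, ((2 : ℝ) ^ k / 2 ^ (2 * n)) *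
        (∑ l ∈ Finset.range (k + 1),
          (-2 : ℝ) ^ l * (Nat.choose m l) * (Nat.choose (n - m) (k - l)))
      ≤ (3 / 4 : ℝ) ^ n := by
  have h := dual_aux_sum n m hm
  rw [Finset.sum_range_succ, dual_aux_top n m hm] at h
  have h2 : (2 : ℝ) ^ (2 * n) = 2 ^ n * 2 ^ n := by rw [two_mul, pow_add]
  have h4 : (4 : ℝ) ^ n = 2 ^ n * 2 ^ n := by rw [← mul_pow]; norm_num
  have hp : (0 : ℝ) < 2 ^ n := by positivity
  have e : (-2 : ℝ) ^ m / 2 ^ n +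
      ∑ k ∈ Finset.range n, ((2 : ℝ) ^ k / 2 ^ (2 * n)) *
        (∑ l ∈ Finset.range (k + 1),
          (-2 : ℝ) ^ l * (Nat.choose m l) * (Nat.choose (n - m) (k - l)))
      = ((-1) ^ m * 3 ^ n) / (2 ^ n * 2 ^ n) := by
    rw [← h, h2, add_div, Finset.sum_div, add_comm]
    congr 1
    · exact Finset.sum_congr rfl fun k _ => by ring
    · field_simp
  rw [e, div_pow, h4]
  have h1 : (-1 : ℝ) ^ m ≤ 1 := by
    rcases neg_one_pow_eq_or ℝ m with h | h <;> rw [h] <;> norm_num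
  have h3 : (0 : ℝ) < 3 ^ n := by positivity
  gcongr
  nlinarith

end
end

section
/- Let n ≥ 1 be an integer and suppose z ∈ ℝ and δ_0, …, δ_n ≥ 0 satisfy, for every m = 0, 1, …, n: z ≥ (−2)^m · 2^{−n} + ∑_{k=0}^{n} δ_k · ( ∑_{ℓ=0}^{k} (−2)^ℓ · binom(m,ℓ) · binom(n−m, k−ℓ) ), where binom(a,b) := 0 for b > a. Then for every p : {0,1}^n → ℝ with p(y) ≥ 0 for all y, ∑_y p(y) ≤ 1, ∑_{y} (∏_{i=1}^n T(x_i,y_i)) p(y) ≥ 0 for all x ∈ {0,1}^n (where T(0,0) = −2, T(0,1) = 1, T(1,0) = 1, T(1,1) = 1), and p(y) depending only on the number of 0-entries of y, one has ∑_{y∈{0,1}^n} (∏_{i=1}^n t(y_i)) p(y) ≤ z, where t(0) = −1 and t(1) = 1/2. -/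
open scoped BigOperators
open Classical
open scoped ComplexOrder

noncomputable section

open Polynomial in
lemma aux_coeff (a : ℝ) (m l : ℕ) :
    ((1 + C a * X : ℝ[X]) ^ m).coeff l = a ^ l * (Nat.choose m l) := by
  have : (1 + C a * X : ℝ[X]) ^ m = ((1 + X : ℝ[X]) ^ m).comp (C a * X) := by simp
  rw [this, comp_C_mul_X_coeff, coeff_one_add_X_pow, mul_comm]

open Polynomial in
lemma aux_kraw (n : ℕ) (y : Fin n → Fin 2) (k m : ℕ)
    (hm : (Finset.univ.filter fun i => y i = 0).card = m) :
    ∑ x ∈ Finset.univ.filter (fun x : Fin n → Fin 2 =>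
        (Finset.univ.filter fun i => x i = 0).card = k),
      (∏ i, (!![(-2 : ℝ), 1; 1, 1]) (x i) (y i)) =
    ∑ l ∈ Finset.range (k + 1),
            (-2 : ℝ) ^ l * (Nat.choose m l) * (Nat.choose (n - m) (k - l)) := by
  have hc : (Finset.univ.filter fun i => ¬ y i = 0).card = n - m := by
    have := Finset.card_filter_add_card_filter_not (s := (Finset.univ : Finset (Fin n)))
      (fun i => y i = 0)
    simp only [Finset.card_univ, Fintype.card_fin] at this
    omega
  have h1 : ∏ i, ∑ j : Fin 2, (C ((!![(-2 : ℝ), 1; 1, 1]) j (y i)) *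
      (if j = 0 then X else 1) : ℝ[X]) =
      (1 + C (-2) * X) ^ m * (1 + C 1 * X) ^ (n - m) := by
    rw [← hc, ← hm, ← Finset.prod_const, ← Finset.prod_const, ← Finset.prod_ite]
    refine Finset.prod_congr rfl fun i _ => ?_
    obtain h | h : y i = 0 ∨ y i = 1 := by
      generalize y i = a
      fin_cases a <;> simp
    · simp [h, Fin.sum_univ_two]; ring
    · simp [h, Fin.sum_univ_two]; ring
  rw [Finset.prod_univ_sum, Fintype.piFinset_univ] at h1
  have h2 := congrArg (fun q => coeff q k) h1
  simp only [coeff_mul _ _ k, aux_coeff] at h2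
  rw [Finset.Nat.sum_antidiagonal_eq_sum_range_succ_mk] at h2
  simp only [one_pow, one_mul] at h2
  rw [← h2, finsetSum_coeff, Finset.sum_filter]
  refine Finset.sum_congr rfl fun x _ => ?_
  rw [Finset.prod_mul_distrib, ← map_prod, coeff_C_mul, Finset.prod_ite]
  simp only [Finset.prod_const, one_pow, mul_one, coeff_X_pow]
  simp [eq_comm]

/-- weak duality for the symmetrized linear programme: any `z` and
`δ_0, …, δ_n ≥ 0` satisfying the symmetrized dual constraints upper-bound the objective
of any symmetric primal-feasible point `p`. -/
theorem lp_weak_duality (n : ℕ) (hn : 1 ≤ n) (z : ℝ) (δ : ℕ → ℝ)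
    (hδ : ∀ k ≤ n, 0 ≤ δ k)
    (hdual : ∀ m ≤ n,
      (-2 : ℝ) ^ m / 2 ^ n +
        ∑ k ∈ Finset.range (n + 1), δ k *
          (∑ l ∈ Finset.range (k + 1),
            (-2 : ℝ) ^ l * (Nat.choose m l) * (Nat.choose (n - m) (k - l))) ≤ z)
    (p : (Fin n → Fin 2) → ℝ)
    (hpos : ∀ y, 0 ≤ p y)
    (hsum : ∑ y, p y ≤ 1)
    (hconstr : ∀ x : Fin n → Fin 2,
      0 ≤ ∑ y, (∏ i, (!![(-2 : ℝ), 1; 1, 1]) (x i) (y i)) * p y)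
    (hsymm : ∀ y y' : Fin n → Fin 2,
      (Finset.univ.filter fun i => y i = 0).card =
        (Finset.univ.filter fun i => y' i = 0).card → p y = p y') :
    ∑ y, (∏ i, (![(-1 : ℝ), 1 / 2]) (y i)) * p y ≤ z := by
  have hz : 0 ≤ z := by
    refine le_trans ?_ (hdual 0 (Nat.zero_le _))
    refine add_nonneg (by positivity) (Finset.sum_nonneg fun k hk => ?_)
    refine mul_nonneg (hδ k (by simpa [Nat.lt_succ_iff] using hk))
      (Finset.sum_nonneg fun l _ => ?_)
    cases l with
    | zero => simp
    | succ l => simp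
  let K : ℕ → (Fin n → Fin 2) → ℝ := fun k y =>
    ∑ x ∈ Finset.univ.filter (fun x : Fin n → Fin 2 =>
        (Finset.univ.filter fun i => x i = 0).card = k),
      (∏ i, (!![(-2 : ℝ), 1; 1, 1]) (x i) (y i))
  have hy : ∀ y : Fin n → Fin 2, (∏ i, (![(-1 : ℝ), 1 / 2]) (y i)) +
      ∑ k ∈ Finset.range (n + 1), δ k * K k y ≤ z := by
    intro y
    have hm : (Finset.univ.filter fun i => y i = 0).card ≤ n := by
      simpa using Finset.card_le_univ (Finset.univ.filter fun i => y i = 0)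
    have h := hdual _ hm
    have ht : (∏ i, (![(-1 : ℝ), 1 / 2]) (y i)) =
        (-2 : ℝ) ^ (Finset.univ.filter fun i => y i = 0).card / 2 ^ n := by
      have h2 : (2 : ℝ) ^ n = ∏ _i : Fin n, 2 := by simp
      rw [h2, ← Finset.prod_const, Finset.prod_filter, ← Finset.prod_div_distrib]
      refine Finset.prod_congr rfl fun i _ => ?_
      generalize y i = a
      fin_cases a <;> simp
    rw [ht]
    simp only [K, aux_kraw n y _ _ rfl]
    exact h
  have hK : 0 ≤ ∑ y, (∑ k ∈ Finset.range (n + 1), δ k * K k y) * p y := by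
    simp only [Finset.sum_mul]
    rw [Finset.sum_comm]
    refine Finset.sum_nonneg fun k hk => ?_
    simp only [mul_assoc]
    rw [← Finset.mul_sum]
    refine mul_nonneg (hδ k (by simpa [Nat.lt_succ_iff] using hk)) ?_
    simp only [K, Finset.sum_mul]
    rw [Finset.sum_comm]
    exact Finset.sum_nonneg fun x _ => hconstr x
  have h3 : ∑ y, ((∏ i, (![(-1 : ℝ), 1 / 2]) (y i)) +
      ∑ k ∈ Finset.range (n + 1), δ k * K k y) * p y ≤ ∑ y, z * p y :=
    Finset.sum_le_sum fun y _ => mul_le_mul_of_nonneg_right (hy y) (hpos y)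
  rw [← Finset.mul_sum] at h3
  simp only [add_mul] at h3
  rw [Finset.sum_add_distrib] at h3
  have h4 := mul_le_mul_of_nonneg_left hsum hz
  linarith


end
end

section
/- Let n ≥ 1 be an integer. Let T_∞ be the 3×3 real matrix with rows (1, 1, −1), (−2, 1, 0), (1, 1, 1) (rows indexed by x ∈ {0,1,2}, columns by y ∈ {0,1,2}), and let s : {0,1,2} → ℝ be s(0) = −1, s(1) = 1/2, s(2) = 0. Then for every p : {0,1,2}^n → ℝ with p(y) ≥ 0 for all y, ∑_y p(y) = 1, and ∑_{y∈{0,1,2}^n} (∏_{i=1}^n T_∞(x_i, y_i)) p(y) ≥ 0 for all x ∈ {0,1,2}^n, one has ∑_{y∈{0,1,2}^n} (∏_{i=1}^n s(y_i)) p(y) ≤ ζ_n, where ζ_n is the optimum of the reduced linear programme: the maximum of ∑_{y∈{0,1}^n} (∏_{i=1}^n t(y_i)) q(y) over q : {0,1}^n → ℝ with q ≥ 0, ∑_y q(y) ≤ 1, and ∑_y (∏_i T(x_i,y_i)) q(y) ≥ 0 for all x ∈ {0,1}^n, with t(0) = −1, t(1) = 1/2 and T the 2×2 matrix with rows (−2,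 1) and (1, 1). In particular the objective is at most (3/4)^n. -/
open scoped BigOperators
open Classical
open scoped ComplexOrder

noncomputable section

/-- Expansion of a tensor power of nonnegative combinations. -/
lemma expand_aux {n : ℕ} {ι κ : Type*} [Fintype ι] [Fintype κ]
    (C : Fin n → ι → ℝ) (A : ι → κ → ℝ) (B : Fin n → κ → ℝ)
    (hB : ∀ i y, B i y = ∑ j, C i j * A j y) (p : (Fin n → κ) → ℝ) :
    ∑ y, (∏ i, B i (y i)) * p y
      = ∑ x : Fin n → ι, (∏ i, C i (x i)) * ∑ y, (∏ i, A (x i) (y i)) * p y := by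
  simp_rw [hB, Finset.prod_univ_sum, Fintype.piFinset_univ, Finset.sum_mul, Finset.mul_sum]
  rw [Finset.sum_comm]
  simp_rw [Finset.prod_mul_distrib, mul_assoc]

lemma restrict_aux {n : ℕ} (B : Fin n → Fin 3 → ℝ) (hB : ∀ i, B i 2 = 0)
    (p : (Fin n → Fin 3) → ℝ) :
    ∑ z : Fin n → Fin 2, (∏ i, B i (Fin.castSucc (z i))) * p (fun i => Fin.castSucc (z i))
      = ∑ y, (∏ i, B i (y i)) * p y := by
  refine Fintype.sum_of_injective (fun (z : Fin n → Fin 2) i => Fin.castSucc (z i)) ?_ _ _ ?_ ?_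
  · intro z z' h
    funext i
    exact Fin.castSucc_injective _ (congrFun h i)
  · intro y hy
    have : ∃ i, y i = 2 := by
      by_contra hc
      push Not at hc
      refine hy ⟨fun i => (y i).castPred (hc i), ?_⟩
      funext i
      simp
    obtain ⟨i, hi⟩ := this
    rw [Finset.prod_eq_zero (Finset.mem_univ i) (by rw [hi, hB]), zero_mul]
  · intro z
    rfl

lemma two_bound {n : ℕ} (q : (Fin n → Fin 2) → ℝ) (h0 : ∀ y, 0 ≤ q y) (h1 : ∑ y, q y ≤ 1)
    (hc : ∀ x : Fin n → Fin 2,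
      0 ≤ ∑ y, (∏ i, (!![(-2 : ℝ), 1; 1, 1]) (x i) (y i)) * q y) :
    ∑ y, (∏ i, (![(-1 : ℝ), 1 / 2]) (y i)) * q y ≤ (3 / 4 : ℝ) ^ n := by
  have e := expand_aux (n := n) (fun _ => ![(1 / 2 : ℝ), 1 / 4]) (!![(-2 : ℝ), 1; 1, 1])
    (fun _ => ![(-3 / 4 : ℝ), 3 / 4])
    (by intro i y; fin_cases y <;> norm_num [Fin.sum_univ_two]) q
  have hC : ∀ j : Fin 2, 0 ≤ (![(1 / 2 : ℝ), 1 / 4]) j := by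
    intro j; fin_cases j <;> norm_num
  have hs := Finset.single_le_sum (s := Finset.univ)
    (f := fun x : Fin n → Fin 2 => (∏ i, (![(1 / 2 : ℝ), 1 / 4]) (x i)) *
      ∑ y, (∏ i, (!![(-2 : ℝ), 1; 1, 1]) (x i) (y i)) * q y)
    (fun x _ => mul_nonneg (Finset.prod_nonneg fun i _ => hC _) (hc x))
    (Finset.mem_univ (fun _ => 0))
  have e2 : ∑ y, (∏ i, (![(-1 : ℝ), 1 / 2]) (y i)) * q y
      = (∏ _i : Fin n, (![(1 / 2 : ℝ), 1 / 4]) 0) *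
      ∑ y, (∏ i, (!![(-2 : ℝ), 1; 1, 1]) 0 (y i)) * q y := by
    rw [Finset.mul_sum]
    refine Finset.sum_congr rfl fun y _ => ?_
    rw [← mul_assoc, ← Finset.prod_mul_distrib]
    congr 1
    refine Finset.prod_congr rfl fun i _ => ?_
    generalize y i = j
    fin_cases j <;> norm_num
  rw [e2]
  refine hs.trans ?_
  rw [← e]
  calc ∑ y, (∏ i, (![(-3 / 4 : ℝ), 3 / 4]) (y i)) * q y
      ≤ ∑ y, (3 / 4 : ℝ) ^ n * q y := by
        refine Finset.sum_le_sum fun y _ => mul_le_mul_of_nonneg_right ?_ (h0 y)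
        refine (le_abs_self _).trans ?_
        rw [Finset.abs_prod]
        refine le_of_eq ?_
        rw [Finset.prod_congr rfl (g := fun _ => (3 / 4 : ℝ)) ?_]
        · rw [Finset.prod_const, Finset.card_univ, Fintype.card_fin]
        · intro i _
          generalize y i = j
          fin_cases j <;> norm_num [abs_div]
    _ = (3 / 4 : ℝ) ^ n * ∑ y, q y := by rw [Finset.mul_sum]
    _ ≤ (3 / 4 : ℝ) ^ n := mul_le_of_le_one_right (by positivity) h1

/-- the three-symbol linear programme (constraint matrix `T_∞^{⊗n}`,
objective `s^{⊗n}`) is dominated by the reduced two-symbol programme `ζ_n`; in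
particular its objective is at most `(3/4)^n`. -/
theorem lp_three_symbol_reduction (n : ℕ) (hn : 1 ≤ n)
    (p : (Fin n → Fin 3) → ℝ)
    (hpos : ∀ y, 0 ≤ p y)
    (hsum : ∑ y, p y = 1)
    (hconstr : ∀ x : Fin n → Fin 3,
      0 ≤ ∑ y, (∏ i, (!![(1 : ℝ), 1, -1; -2, 1, 0; 1, 1, 1]) (x i) (y i)) * p y) :
    (∑ y, (∏ i, (![(-1 : ℝ), 1 / 2, 0]) (y i)) * p y ≤
      sSup {v : ℝ | ∃ q : (Fin n → Fin 2) → ℝ,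
        (∀ y, 0 ≤ q y) ∧ (∑ y, q y ≤ 1) ∧
        (∀ x : Fin n → Fin 2,
          0 ≤ ∑ y, (∏ i, (!![(-2 : ℝ), 1; 1, 1]) (x i) (y i)) * q y) ∧
        v = ∑ y, (∏ i, (![(-1 : ℝ), 1 / 2]) (y i)) * q y}) ∧
    (∑ y, (∏ i, (![(-1 : ℝ), 1 / 2, 0]) (y i)) * p y ≤ (3 / 4 : ℝ) ^ n) := by
  set q : (Fin n → Fin 2) → ℝ := fun z => p (fun i => Fin.castSucc (z i)) with hq
  have q0 : ∀ y, 0 ≤ q y := fun y => hpos _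
  have q1 : ∑ y, q y ≤ 1 := by
    have r := restrict_aux (n := n) (fun _ => ![(1 : ℝ), 1, 0]) (by intro i; rfl) p
    have l : ∀ z : Fin n → Fin 2,
        (∏ i, (![(1 : ℝ), 1, 0]) (Fin.castSucc (z i))) * p (fun i => Fin.castSucc (z i)) = q z := by
      intro z
      rw [Finset.prod_eq_one, one_mul]
      intro i _
      generalize z i = j
      fin_cases j <;> rfl
    rw [Finset.sum_congr rfl fun z _ => l z] at r
    rw [r]
    refine le_trans ?_ hsum.le
    refine Finset.sum_le_sum fun y _ => mul_le_of_le_one_left (hpos y) ?_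
    refine Finset.prod_le_one ?_ ?_ <;> intro i _ <;> generalize y i = j <;>
      fin_cases j <;> norm_num
  have qc : ∀ x : Fin n → Fin 2,
      0 ≤ ∑ y, (∏ i, (!![(-2 : ℝ), 1; 1, 1]) (x i) (y i)) * q y := by
    intro x
    have r := restrict_aux (n := n) (fun i => (!![(-2 : ℝ), 1, 0; 1, 1, 0]) (x i))
      (by intro i; generalize x i = j; fin_cases j <;> rfl) p
    have l : ∀ z : Fin n → Fin 2,
        (∏ i, (!![(-2 : ℝ), 1, 0; 1, 1, 0]) (x i) (Fin.castSucc (z i)))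
          = ∏ i, (!![(-2 : ℝ), 1; 1, 1]) (x i) (z i) := by
      intro z
      refine Finset.prod_congr rfl fun i _ => ?_
      generalize z i = j
      generalize x i = k
      fin_cases j <;> fin_cases k <;> rfl
    simp only [l] at r
    rw [hq, r, expand_aux (n := n) (fun i => (!![(0 : ℝ), 1, 0; 1 / 2, 0, 1 / 2]) (x i))
      (!![(1 : ℝ), 1, -1; -2, 1, 0; 1, 1, 1]) _ _ p]
    · refine Finset.sum_nonneg fun w _ => mul_nonneg (Finset.prod_nonneg fun i _ => ?_) (hconstr w)
      generalize x i = j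
      generalize w i = k
      fin_cases j <;> fin_cases k <;> norm_num
    · intro i y
      generalize x i = j
      rw [Fin.sum_univ_three]
      fin_cases j <;> fin_cases y <;> simp [Matrix.of_apply, Matrix.cons_val] <;> norm_num
  have qo : ∑ y, (∏ i, (![(-1 : ℝ), 1 / 2, 0]) (y i)) * p y
      = ∑ y, (∏ i, (![(-1 : ℝ), 1 / 2]) (y i)) * q y := by
    rw [← restrict_aux (n := n) (fun _ => ![(-1 : ℝ), 1 / 2, 0]) (by intro i; rfl) p]
    refine Finset.sum_congr rfl fun z _ => ?_
    congr 1
    refine Finset.prod_congr rfl fun i _ => ?_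
    generalize z i = j
    fin_cases j <;> rfl
  rw [qo]
  refine ⟨le_csSup ⟨(3 / 4 : ℝ) ^ n, ?_⟩ ⟨q, q0, q1, qc, rfl⟩, two_bound q q0 q1 qc⟩
  rintro v ⟨q', a, b, c, rfl⟩
  exact two_bound q' a b c

end
end

section
/- For all integers 2 ≤ k ≤ d, the density operator ρ = P_k^{(d)}/binom(d,k) on (ℂ^d)^{⊗k}, with system A the first tensor factor, system B the second, and system E the remaining k−2 factors, satisfies I(A;B|E)_ρ = log₂( binom(d,k−1)² / (binom(d,k−2)·binom(d,k)) ) = log₂( (k/(k−1)) · ((d−k+2)/(d−k+1)) ), where I(A;B|E) = H(ρ_{AE}) + H(ρ_{BE}) − H(ρ_{ABE}) − H(ρ_E) is the quantum conditional mutual information. -/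
open scoped BigOperators
open Classical
open scoped ComplexOrder

noncomputable section

def dMat {α : Type*} (k : ℕ) (f g : Fin k → α) : Matrix (Fin k) (Fin k) ℂ :=
  Matrix.of fun j i => if f i = g j then 1 else 0

theorem asymProjK_eq_det (d k : ℕ) (f g : Fin k → Fin d) :
    asymProjK d k f g = (1 / (Nat.factorial k) : ℂ) * (dMat k f g).det := by
  unfold asymProjK
  rw [Matrix.of_apply, Matrix.det_apply']
  congr 1
  refine Finset.sum_congr rfl fun σ _ => ?_
  congr 1
  simp only [dMat, Matrix.of_apply]
  by_cases h : f = g ∘ σ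
  · have h' : ∀ i, f i = g (σ i) := fun i => congrFun h i
    simp [if_pos h, h']
  · rw [if_neg h]
    obtain ⟨i, hi⟩ := Function.ne_iff.mp h
    exact (Finset.prod_eq_zero (Finset.mem_univ i) (if_neg hi)).symm

theorem dMat_comm (d k : ℕ) (f g : Fin k → Fin d) :
    (dMat k f g).det = (dMat k g f).det := by
  rw [← Matrix.det_transpose]
  congr 1
  ext i j
  simp [dMat, eq_comm]

theorem dMat_not_inj (d k : ℕ) (f g : Fin k → Fin d) (h : ¬ Function.Injective f) :
    (dMat k f g).det = 0 := by
  simp only [Function.Injective, not_forall] at h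
  obtain ⟨i, j, hij, hne⟩ := h
  exact Matrix.det_zero_of_column_eq hne (fun l => by simp [dMat, hij])

theorem dMat_perm_left (d k : ℕ) (f g : Fin k → Fin d) (σ : Equiv.Perm (Fin k)) :
    (dMat k (f ∘ σ) g).det = ((Equiv.Perm.sign σ : ℤ) : ℂ) * (dMat k f g).det := by
  rw [← Matrix.det_permute']
  rfl

theorem dMat_perm_both (d k : ℕ) (f g : Fin k → Fin d) (σ : Equiv.Perm (Fin k)) :
    (dMat k (f ∘ σ) (g ∘ σ)).det = (dMat k f g).det := by
  rw [← Matrix.det_submatrix_equiv_self σ (dMat k f g)]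
  rfl

theorem dMat_cons (d k : ℕ) (f g : Fin k → Fin d) (b : Fin d) :
    (dMat (k+1) (Fin.cons b f : Fin (k+1) → Fin d) (Fin.cons b g)).det
      = if b ∈ Finset.univ.image f then 0 else (dMat k f g).det := by
  split_ifs with h
  · apply dMat_not_inj
    rw [Fin.cons_injective_iff]
    simp at h
    simp [h]
  · rw [Matrix.det_succ_row_zero, Fin.sum_univ_succ]
    rw [Finset.sum_eq_zero]
    · simp only [dMat, Matrix.of_apply, Fin.cons_zero, Fin.succAbove_zero]
      simp
      congr 1
    · intro i _
      have : f i ≠ b := by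
        intro h'
        apply h
        simp only [Finset.mem_image, Finset.mem_univ, true_and]
        exact ⟨i, h'⟩
      simp [dMat, this]

theorem asymProjK_ptrace (d k : ℕ) (f g : Fin k → Fin d) :
    ∑ b, asymProjK d (k+1) (Fin.cons b f) (Fin.cons b g)
      = (((d:ℂ) - k) / (k+1)) * asymProjK d k f g := by
  simp only [asymProjK_eq_det, dMat_cons]
  rw [← Finset.mul_sum]
  by_cases hf : Function.Injective f
  · rw [Finset.sum_ite, Finset.sum_const_zero, zero_add, Finset.sum_const,
      Finset.filter_not, Finset.card_sdiff_of_subset (by simp)]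
    have : (Finset.univ.filter (fun x => x ∈ Finset.univ.image f)) = Finset.univ.image f := by
      ext; simp
    rw [this, Finset.card_image_of_injective _ hf]
    have hkd : k ≤ d := by simpa using Fintype.card_le_of_injective f hf
    simp only [Finset.card_univ, Fintype.card_fin, nsmul_eq_mul]
    rw [Nat.cast_sub hkd, Nat.factorial_succ]
    have h1 : (k.factorial : ℂ) ≠ 0 := by exact_mod_cast k.factorial_ne_zero
    have h2 : ((k:ℂ) + 1) ≠ 0 := by exact_mod_cast k.succ_ne_zero
    push_cast
    field_simp
  · simp [dMat_not_inj d k f g hf]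

theorem asymProjK_swap (d m : ℕ) (a b a' b' : Fin d) (e e' : Fin m → Fin d) :
    asymProjK d (m+2) (Fin.cons a (Fin.cons b e)) (Fin.cons a' (Fin.cons b' e'))
     = asymProjK d (m+2) (Fin.cons b (Fin.cons a e)) (Fin.cons b' (Fin.cons a' e')) := by
  have key : ∀ (x y : Fin d) (u : Fin m → Fin d),
      (Fin.cons x (Fin.cons y u : Fin (m+1) → Fin d) : Fin (m+2) → Fin d) ∘ (Equiv.swap 0 1)
       = Fin.cons y (Fin.cons x u : Fin (m+1) → Fin d) := by
    intro x y u
    funext i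
    refine Fin.cases ?_ (fun j => ?_) i
    · simp only [Function.comp, Equiv.swap_apply_left]; rfl
    · refine Fin.cases ?_ (fun l => ?_) j
      · change (Fin.cons x (Fin.cons y u : Fin (m+1) → Fin d) : Fin (m+2) → Fin d) ((Equiv.swap 0 1) 1) = _
        rw [Equiv.swap_apply_right]; rfl
      · rw [Function.comp, Equiv.swap_apply_of_ne_of_ne]
        · rfl
        · exact Fin.succ_ne_zero _
        · intro h
          exact Fin.succ_ne_zero l (Fin.succ_injective _ h)
  rw [asymProjK_eq_det, asymProjK_eq_det, ← key a b e, ← key a' b' e', dMat_perm_both]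

theorem asymProjK_herm (d k : ℕ) : (asymProjK d k).IsHermitian := by
  ext f g
  rw [Matrix.conjTranspose_apply, asymProjK_eq_det, asymProjK_eq_det, dMat_comm, star_mul',
    ← Matrix.det_conjTranspose]
  congr 1
  · simp
  · rw [← Matrix.det_transpose]
    congr 1
    ext i j
    simp [dMat, apply_ite]

theorem asymProjK_idem (d k : ℕ) : asymProjK d k * asymProjK d k = asymProjK d k := by
  ext f g
  rw [Matrix.mul_apply]
  have h1 : (k.factorial : ℂ) ≠ 0 := by exact_mod_cast k.factorial_ne_zero
  have e1 : ∀ h, asymProjK d k f h * asymProjK d k h g =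
     (1 / (Nat.factorial k) : ℂ) * ∑ σ : Equiv.Perm (Fin k), 
       (if f ∘ ⇑σ⁻¹ = h then ((Equiv.Perm.sign σ : ℤ) : ℂ) * asymProjK d k h g else 0) := by
    intro h
    conv_lhs => enter [1]; unfold asymProjK
    rw [Matrix.of_apply, mul_assoc, Finset.sum_mul]
    congr 1
    refine Finset.sum_congr rfl fun σ _ => ?_
    have : (f = h ∘ σ) ↔ f ∘ ⇑σ⁻¹ = h := by
      constructor
      · rintro rfl; ext; simp
      · rintro rfl; ext; simp
    simp only [this]
    split_ifs <;> simp
  simp only [e1]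
  rw [← Finset.mul_sum, Finset.sum_comm]
  simp only [Finset.sum_ite_eq, Finset.mem_univ, if_true]
  have e2 : ∀ σ : Equiv.Perm (Fin k), ((Equiv.Perm.sign σ : ℤ) : ℂ) * asymProjK d k (f ∘ ⇑σ⁻¹) g
      = asymProjK d k f g := by
    intro σ
    rw [asymProjK_eq_det, asymProjK_eq_det, dMat_perm_left, Equiv.Perm.sign_inv]
    have : ((Equiv.Perm.sign σ : ℤ) : ℂ) * ((Equiv.Perm.sign σ : ℤ) : ℂ) = 1 := by
      rw [← Int.cast_mul, ← Units.val_mul, Int.units_mul_self]; simp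
    linear_combination (1 / (k.factorial : ℂ) * (dMat k f g).det) * this
  simp only [e2, Finset.sum_const, Finset.card_univ, Fintype.card_perm, Fintype.card_fin,
    nsmul_eq_mul]
  field_simp

theorem choose_rec (d k : ℕ) :
    (((d:ℂ) - k) / (k+1)) * (d.choose k : ℂ) = (d.choose (k+1) : ℂ) := by
  have h2 : ((k:ℂ) + 1) ≠ 0 := by exact_mod_cast k.succ_ne_zero
  rcases le_or_gt k d with h | h
  · have := Nat.choose_succ_right_eq d k
    have h3 : (d.choose (k+1) : ℂ) * (k+1) = d.choose k * ((d:ℂ) - k) := by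
      rw [← Nat.cast_sub h]; exact_mod_cast this
    field_simp
    linear_combination -h3
  · rw [Nat.choose_eq_zero_of_lt h, Nat.choose_eq_zero_of_lt (by omega)]; simp

theorem asymProjK_trace (d k : ℕ) : (asymProjK d k).trace = (d.choose k : ℂ) := by
  induction k with
  | zero =>
    simp [Matrix.trace, asymProjK_eq_det]
  | succ k ih =>
    rw [← choose_rec, ← ih, Matrix.trace, Matrix.trace, Finset.mul_sum]
    rw [← (Fin.consEquiv (fun _ : Fin (k+1) => Fin d)).sum_comp, Fintype.sum_prod_type_right]
    refine Finset.sum_congr rfl fun f _ => ?_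
    exact asymProjK_ptrace d k f f

theorem vnEntropy_flat {ι : Type*} [Fintype ι] [DecidableEq ι] (M : Matrix ι ι ℂ) (c : ℝ)
    (hM : M.IsHermitian) (h2 : M * M = (c : ℂ) • M) (ht : M.trace = 1) :
    vnEntropy M = - Real.logb 2 c := by
  unfold vnEntropy
  rw [dif_pos hM]
  have hs : ∑ i, hM.eigenvalues i = 1 := by
    have := hM.trace_eq_sum_eigenvalues
    rw [ht] at this
    have h3 : ((∑ i, hM.eigenvalues i : ℝ) : ℂ) = 1 := by
      rw [this]; simp
    exact_mod_cast h3
  have he : ∀ i, hM.eigenvalues i * hM.eigenvalues i = c * hM.eigenvalues i := by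
    intro i
    have hv := hM.mulVec_eigenvectorBasis i
    have h4 := congrArg (fun N => N.mulVec (WithLp.ofLp (hM.eigenvectorBasis i))) h2
    simp only [← Matrix.mulVec_mulVec, Matrix.smul_mulVec, hv, Matrix.mulVec_smul] at h4
    have hne : WithLp.ofLp (hM.eigenvectorBasis i) ≠ 0 := by
      intro h0
      have := hM.eigenvectorBasis.orthonormal.ne_zero i
      apply this
      ext j
      exact congrFun h0 j
    obtain ⟨j, hj⟩ := Function.ne_iff.mp hne
    have h5 := congrFun h4 j
    simp only [Pi.smul_apply, Complex.real_smul, smul_eq_mul, ← mul_assoc] at h5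
    have h6 := mul_right_cancel₀ hj h5
    exact_mod_cast h6
  have hl : ∀ i, hM.eigenvalues i * Real.logb 2 (hM.eigenvalues i)
      = hM.eigenvalues i * Real.logb 2 c := by
    intro i
    by_cases h0 : hM.eigenvalues i = 0
    · simp [h0]
    · rw [mul_right_cancel₀ h0 (he i)]
  simp only [hl]
  rw [← Finset.sum_mul, hs, one_mul]

theorem vnEntropy_asym {ι : Type*} [Fintype ι] [DecidableEq ι] (d k : ℕ) (hk : k ≤ d)
    (e : ι ≃ (Fin k → Fin d)) (M : Matrix ι ι ℂ)
    (hM : ∀ i j, M i j = asymProjK d k (e i) (e j) / (d.choose k : ℂ)) :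
    vnEntropy M = Real.logb 2 (d.choose k) := by
  have hc : (d.choose k : ℂ) ≠ 0 := by exact_mod_cast (Nat.choose_pos hk).ne'
  have hE : M = (((d.choose k : ℝ)⁻¹ : ℝ) : ℂ) • (asymProjK d k).submatrix e e := by
    ext i j
    rw [hM]; simp [div_eq_inv_mul]
  rw [vnEntropy_flat M (d.choose k : ℝ)⁻¹, Real.logb_inv, neg_neg]
  · ext i j
    rw [Matrix.conjTranspose_apply, hM, hM, star_div₀, ← Matrix.conjTranspose_apply,
      (asymProjK_herm d k).eq]
    simp
  · conv_rhs => rw [hE]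
    rw [hE, Matrix.smul_mul, Matrix.mul_smul, Matrix.submatrix_mul_equiv, asymProjK_idem]
  · have := asymProjK_trace d k
    rw [Matrix.trace] at this ⊢
    simp only [Matrix.diag_apply, hM] at this ⊢
    rw [← Finset.sum_div, e.sum_comp (fun x => asymProjK d k x x), this, div_self hc]

theorem ptrace_norm (d k : ℕ) (hk : k + 1 ≤ d) (f g : Fin k → Fin d) :
    ∑ b, asymProjK d (k+1) (Fin.cons b f) (Fin.cons b g) / (d.choose (k+1) : ℂ)
      = asymProjK d k f g / (d.choose k : ℂ) := by
  have hc : (d.choose k : ℂ) ≠ 0 := by exact_mod_cast (Nat.choose_pos (by omega : k ≤ d)).ne'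
  have hc' : (d.choose (k+1) : ℂ) ≠ 0 := by exact_mod_cast (Nat.choose_pos hk).ne'
  rw [← Finset.sum_div, asymProjK_ptrace, div_eq_div_iff hc' hc, ← choose_rec]
  ring

theorem cmi_first (d m : ℕ) (hk : m + 2 ≤ d) :
    condMutInfo (Matrix.of fun p q : (Fin d × Fin d) × (Fin m → Fin d) =>
        asymProjK d (m + 2) (Fin.cons p.1.1 (Fin.cons p.1.2 p.2))
            (Fin.cons q.1.1 (Fin.cons q.1.2 q.2)) / (Nat.choose d (m + 2) : ℂ))
      = Real.logb 2 ((Nat.choose d (m + 1) : ℝ) ^ 2 /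
          ((Nat.choose d m : ℝ) * (Nat.choose d (m + 2) : ℝ))) := by
  have p0 : (d.choose m : ℝ) ≠ 0 := by exact_mod_cast (Nat.choose_pos (by omega : m ≤ d)).ne'
  have p1 : (d.choose (m+1) : ℝ) ≠ 0 := by
    exact_mod_cast (Nat.choose_pos (by omega : m + 1 ≤ d)).ne'
  have p2 : (d.choose (m+2) : ℝ) ≠ 0 := by exact_mod_cast (Nat.choose_pos hk).ne'
  unfold condMutInfo
  rw [vnEntropy_asym d (m+1) (by omega) (Fin.consEquiv (fun _ : Fin (m+1) => Fin d)),
    vnEntropy_asym d (m+1) (by omega) (Fin.consEquiv (fun _ : Fin (m+1) => Fin d)),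
    vnEntropy_asym d (m+2) (by omega) ((Equiv.prodAssoc _ _ _).trans
      ((Equiv.prodCongr (Equiv.refl _) (Fin.consEquiv (fun _ : Fin (m+1) => Fin d))).trans
        (Fin.consEquiv (fun _ : Fin (m+2) => Fin d)))),
    vnEntropy_asym d m (by omega) (Equiv.refl _)]
  · rw [Real.logb_div (by positivity) (by positivity), Real.logb_mul p0 p2, Real.logb_pow]
    push_cast; ring
  · intro i j
    simp only [Matrix.of_apply, Equiv.refl_apply]
    rw [Finset.sum_comm, ← ptrace_norm d m (by omega)]
    exact Finset.sum_congr rfl fun b _ => ptrace_norm d (m+1) hk _ _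
  · intro i j
    rfl
  · intro i j
    simp only [Matrix.of_apply]
    exact ptrace_norm d (m+1) hk _ _
  · intro i j
    simp only [Matrix.of_apply]
    simp only [asymProjK_swap d m i.1, ]
    exact ptrace_norm d (m+1) hk _ _

theorem cmi_ratio (d m : ℕ) (hk : m + 2 ≤ d) :
    (Nat.choose d (m + 1) : ℝ) ^ 2 / ((Nat.choose d m : ℝ) * (Nat.choose d (m + 2) : ℝ))
     = (((m : ℝ) + 2) / ((m : ℝ) + 1)) * (((d : ℝ) - m) / ((d : ℝ) - m - 1)) := by
  have p0 : (d.choose m : ℝ) ≠ 0 := by exact_mod_cast (Nat.choose_pos (by omega : m ≤ d)).ne'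
  have p2 : (d.choose (m+2) : ℝ) ≠ 0 := by exact_mod_cast (Nat.choose_pos hk).ne'
  have hd : (m : ℝ) + 2 ≤ d := by exact_mod_cast hk
  have h3 : (d:ℝ) - m - 1 ≠ 0 := by linarith
  have h4 : (m:ℝ) + 1 ≠ 0 := by positivity
  have e1 : (d.choose (m+1) : ℝ) * (m+1) = d.choose m * ((d:ℝ) - m) := by
    rw [← Nat.cast_sub (by omega)]; exact_mod_cast Nat.choose_succ_right_eq d m
  have e2 : (d.choose (m+2) : ℝ) * (m+2) = d.choose (m+1) * ((d:ℝ) - m - 1) := by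
    have := Nat.choose_succ_right_eq d (m+1)
    rw [sub_sub, ← Nat.cast_add_one, ← Nat.cast_sub (by omega)]; exact_mod_cast this
  rw [div_mul_div_comm, div_eq_div_iff (mul_ne_zero p0 p2) (mul_ne_zero h4 h3)]
  linear_combination (d.choose (m+1) * ((d:ℝ) - m - 1)) * e1
    - (d.choose m * ((d:ℝ) - m)) * e2

/-- for `2 ≤ k ≤ d` (here `k = m + 2`), the state `P_k^{(d)}/binom(d,k)`
with `A`, `B` the first two factors and `E` the remaining `k - 2` factors has
`I(A;B|E) = log₂(binom(d,k-1)²/(binom(d,k-2) binom(d,k))) = log₂((k/(k-1))·((d-k+2)/(d-k+1)))`. -/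
theorem cmi_antisym_extension (d m : ℕ) (hk : m + 2 ≤ d) :
    condMutInfo (Matrix.of fun p q : (Fin d × Fin d) × (Fin m → Fin d) =>
        asymProjK d (m + 2) (Fin.cons p.1.1 (Fin.cons p.1.2 p.2))
            (Fin.cons q.1.1 (Fin.cons q.1.2 q.2)) / (Nat.choose d (m + 2) : ℂ))
      = Real.logb 2 ((Nat.choose d (m + 1) : ℝ) ^ 2 /
          ((Nat.choose d m : ℝ) * (Nat.choose d (m + 2) : ℝ))) ∧
    condMutInfo (Matrix.of fun p q : (Fin d × Fin d) × (Fin m → Fin d) =>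
        asymProjK d (m + 2) (Fin.cons p.1.1 (Fin.cons p.1.2 p.2))
            (Fin.cons q.1.1 (Fin.cons q.1.2 q.2)) / (Nat.choose d (m + 2) : ℂ))
      = Real.logb 2 ((((m : ℝ) + 2) / ((m : ℝ) + 1)) *
          (((d : ℝ) - m) / ((d : ℝ) - m - 1))) := by
  rw [← cmi_ratio d m hk]
  exact ⟨cmi_first d m hk, cmi_first d m hk⟩

end
end

section
/- For every integer d ≥ 2, the squashed entanglement of the antisymmetric state satisfies: E_sq(α_d) ≤ log₂((d+2)/d) if d is even, and E_sq(α_d) ≤ (1/2)·log₂((d+3)/(d−1)) if d is odd. In particular E_sq(α_d) = O(1/d). -/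
open scoped BigOperators
open Classical
open scoped ComplexOrder

noncomputable section

def GG (d k : ℕ) : Matrix (Fin k → Fin d) (Fin k → Fin d) ℂ :=
  Matrix.of fun f g => ((1 : Matrix (Fin d) (Fin d) ℂ).submatrix f g).det

theorem GG_perm (d k : ℕ) (p : Equiv.Perm (Fin k)) (f g : Fin k → Fin d) :
    GG d k (f ∘ p) (g ∘ p) = GG d k f g := by
  have := Matrix.det_submatrix_equiv_self p ((1 : Matrix (Fin d) (Fin d) ℂ).submatrix f g)
  simpa [GG] using this

theorem GG_herm (d k : ℕ) : (GG d k).IsHermitian := by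
  ext f g
  simp only [GG, Matrix.conjTranspose_apply, Matrix.of_apply]
  rw [← Matrix.det_conjTranspose, Matrix.conjTranspose_submatrix, Matrix.conjTranspose_one]

theorem GG_right (d k : ℕ) (p : Equiv.Perm (Fin k)) (f g : Fin k → Fin d) :
    GG d k f (g ∘ p) = ((Equiv.Perm.sign p : ℤ) : ℂ) * GG d k f g := by
  have := Matrix.det_permute' p ((1 : Matrix (Fin d) (Fin d) ℂ).submatrix f g)
  simpa [GG] using this

theorem GG_expand (d k : ℕ) (g h : Fin k → Fin d) :
    GG d k g h = ∑ p : Equiv.Perm (Fin k), ((Equiv.Perm.sign p : ℤ) : ℂ) *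
      (if g = h ∘ p then 1 else 0) := by
  simp only [GG, Matrix.of_apply]
  rw [← Matrix.det_transpose, Matrix.det_apply']
  refine Finset.sum_congr rfl fun p _ => ?_
  congr 1
  simp only [Matrix.transpose_apply, Matrix.submatrix_apply, Matrix.one_apply]
  rw [Finset.prod_ite_zero]
  simp [funext_iff]

theorem GG_sq (d k : ℕ) : GG d k * GG d k = (k.factorial : ℂ) • GG d k := by
  ext f h
  rw [Matrix.mul_apply]
  simp_rw [GG_expand d k _ h, Finset.mul_sum]
  rw [Finset.sum_comm]
  have : ∀ p : Equiv.Perm (Fin k), ∑ x, GG d k f x * (((Equiv.Perm.sign p : ℤ) : ℂ) *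
      (if x = h ∘ p then 1 else 0)) = GG d k f h := by
    intro p
    rw [Finset.sum_eq_single (h ∘ p)]
    · rw [GG_right]
      rcases Int.units_eq_one_or (Equiv.Perm.sign p) with h1 | h1 <;> simp [h1]
    · intro b _ hb
      simp [hb]
    · simp
  simp_rw [this]
  simp [Fintype.card_perm]

theorem GG_noninj (d k : ℕ) (f g : Fin k → Fin d) (hf : ¬ Function.Injective f) :
    GG d k f g = 0 := by
  simp only [Function.Injective, not_forall] at hf
  obtain ⟨i, j, hij, hne⟩ := hf
  simp only [GG, Matrix.of_apply]
  apply Matrix.det_zero_of_row_eq hne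
  funext x
  exact congrArg (fun t => (1 : Matrix (Fin d) (Fin d) ℂ) t (g x)) hij

theorem GG_cons (d k : ℕ) (b : Fin d) (f g : Fin k → Fin d) :
    GG d (k+1) (Fin.cons b f) (Fin.cons b g) =
      if b ∈ Finset.univ.image f then 0 else GG d k f g := by
  split_ifs with h
  · apply GG_noninj
    intro hi
    simp only [Finset.mem_image, Finset.mem_univ, true_and] at h
    obtain ⟨i, hi'⟩ := h
    have := @hi 0 i.succ (by simp [hi'])
    exact (Fin.succ_ne_zero i) this.symm
  · simp only [Finset.mem_image, Finset.mem_univ, true_and, not_exists] at h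
    simp only [GG, Matrix.of_apply]
    rw [Matrix.det_succ_column_zero, Fin.sum_univ_succ, Finset.sum_eq_zero]
    · simp [Matrix.submatrix_submatrix]
      have h1 : (1 : Matrix (Fin d) (Fin d) ℂ) ((Fin.cons b f : Fin (k+1) → Fin d) 0)
          ((Fin.cons b g : Fin (k+1) → Fin d) 0) = 1 := Matrix.one_apply_eq b
      exact (congrArg (· * ((1 : Matrix (Fin d) (Fin d) ℂ).submatrix f g).det) h1).trans (one_mul _)
    · intro i _
      simp [Matrix.one_apply, h i]

theorem GG_trace (d k : ℕ) (f g : Fin k → Fin d) :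
    ∑ b, GG d (k+1) (Fin.cons b f) (Fin.cons b g) = ((d : ℂ) - k) * GG d k f g := by
  by_cases hf : Function.Injective f
  · simp_rw [GG_cons]
    rw [Finset.sum_ite]
    simp only [Finset.sum_const_zero, zero_add, Finset.sum_const, nsmul_eq_mul]
    congr 1
    have h1 : (Finset.univ.filter fun x => x ∉ Finset.univ.image f) =
      (Finset.univ.image f)ᶜ := by ext; simp
    rw [h1, Finset.card_compl, Finset.card_image_of_injective _ hf, Nat.cast_sub]
    · simp
    · simpa using Fintype.card_le_of_injective f hf
  · rw [GG_noninj d k f g hf, mul_zero]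
    apply Finset.sum_eq_zero
    intro b _
    apply GG_noninj
    intro hi
    apply hf
    intro i j hij
    have := @hi i.succ j.succ (by simpa using hij)
    simpa using this

theorem cons_swap01 {α : Type*} {k : ℕ} (a b : α) (e : Fin k → α) :
    (Fin.cons a (Fin.cons b e : Fin (k+1) → α) : Fin (k+2) → α) =
    (Fin.cons b (Fin.cons a e : Fin (k+1) → α) : Fin (k+2) → α) ∘ (Equiv.swap 0 1) := by
  funext i
  refine Fin.cases ?_ (fun i => ?_) i
  · simp only [Fin.cons_zero, Function.comp_apply, Equiv.swap_apply_left]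
    rfl
  · refine Fin.cases ?_ (fun i => ?_) i
    · simp
    · rw [Function.comp_apply, Equiv.swap_apply_of_ne_of_ne]
      · simp
      · exact Fin.succ_ne_zero _
      · intro h
        exact Fin.succ_ne_zero i (Fin.succ_injective _ h)

theorem cons_swap02 {α : Type*} {k : ℕ} (a b x : α) (e : Fin k → α) :
    (Fin.cons a (Fin.cons b (Fin.cons x e : Fin (k+1) → α) : Fin (k+2) → α) : Fin (k+3) → α) =
    (Fin.cons x (Fin.cons b (Fin.cons a e : Fin (k+1) → α) : Fin (k+2) → α) : Fin (k+3) → α)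
      ∘ (Equiv.swap 0 2) := by
  funext i
  refine Fin.cases ?_ (fun i => ?_) i
  · simp only [Fin.cons_zero, Function.comp_apply, Equiv.swap_apply_left]
    rfl
  · refine Fin.cases ?_ (fun i => ?_) i
    · rw [Function.comp_apply, Equiv.swap_apply_of_ne_of_ne]
      · simp
      · exact Fin.succ_ne_zero _
      · intro h
        exact Fin.succ_ne_zero (0 : Fin (k+1)) (Fin.succ_injective _ h).symm
    · refine Fin.cases ?_ (fun i => ?_) i
      · rw [Function.comp_apply]
        have : (Fin.succ (Fin.succ 0) : Fin (k+3)) = 2 := rfl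
        rw [this, Equiv.swap_apply_right]
        rfl
      · rw [Function.comp_apply, Equiv.swap_apply_of_ne_of_ne]
        · simp
        · exact Fin.succ_ne_zero _
        · intro h
          exact Fin.succ_ne_zero i (Fin.succ_injective _ (Fin.succ_injective _ h))

theorem GG_swap (d k : ℕ) (a b a' b' : Fin d) (e e' : Fin k → Fin d) :
    GG d (k+2) (Fin.cons a (Fin.cons b e : Fin (k+1) → Fin d))
      (Fin.cons a' (Fin.cons b' e' : Fin (k+1) → Fin d)) =
    GG d (k+2) (Fin.cons b (Fin.cons a e : Fin (k+1) → Fin d))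
      (Fin.cons b' (Fin.cons a' e' : Fin (k+1) → Fin d)) := by
  rw [cons_swap01 a b, cons_swap01 a' b', GG_perm]

def KK (d k : ℕ) : ℝ := ∏ i ∈ Finset.range k, ((d : ℝ) - i)

theorem KK_pos (d k : ℕ) (h : k ≤ d) : 0 < KK d k := by
  apply Finset.prod_pos
  intro i hi
  have : i < d := lt_of_lt_of_le (Finset.mem_range.1 hi) h
  have : (i : ℝ) < d := by exact_mod_cast this
  linarith

theorem KK_succ (d k : ℕ) : KK d (k+1) = KK d k * ((d : ℝ) - k) := Finset.prod_range_succ _ _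

theorem sum_cons {α M : Type*} [Fintype α] [AddCommMonoid M] (n : ℕ) (F : (Fin (n+1) → α) → M) :
    ∑ e, F e = ∑ x, ∑ e : Fin n → α, F (Fin.cons x e) := by
  rw [← (Fin.consEquiv (fun _ : Fin (n+1) => α)).sum_comp, Fintype.sum_prod_type]
  rfl

theorem GG_full (d n : ℕ) (a b a' b' : Fin d) :
    (∑ e : Fin n → Fin d, GG d (n+2) (Fin.cons a (Fin.cons b e : Fin (n+1) → Fin d))
      (Fin.cons a' (Fin.cons b' e : Fin (n+1) → Fin d))) * (KK d 2 : ℂ) =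
    (KK d (n+2) : ℂ) * ((if a = a' ∧ b = b' then 1 else 0) - (if a = b' ∧ b = a' then 1 else 0)) := by
  induction n with
  | zero =>
    rw [Fintype.sum_unique, mul_comm]
    congr 1
    simp only [GG, Matrix.of_apply]
    rw [Matrix.det_fin_two]
    have h1 : ∀ (c : Fin d) (e : Fin 1 → Fin d), (Fin.cons c e : Fin 2 → Fin d) 1 = e 0 :=
      fun _ _ => rfl
    simp only [Matrix.submatrix_apply, Fin.cons_zero, h1, Matrix.one_apply]
    split_ifs <;> simp_all
  | succ n ih =>
    rw [sum_cons, Finset.sum_comm]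
    have : ∀ e : Fin n → Fin d, ∑ x, GG d (n+1+2)
        (Fin.cons a (Fin.cons b (Fin.cons x e : Fin (n+1) → Fin d) : Fin (n+2) → Fin d))
        (Fin.cons a' (Fin.cons b' (Fin.cons x e : Fin (n+1) → Fin d) : Fin (n+2) → Fin d)) =
        ((d : ℂ) - (n + 2 : ℕ)) * GG d (n+2) (Fin.cons a (Fin.cons b e : Fin (n+1) → Fin d))
      (Fin.cons a' (Fin.cons b' e : Fin (n+1) → Fin d)) := by
      intro e
      rw [GG_swap, ← GG_trace]
      refine Finset.sum_congr rfl fun x _ => ?_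
      rw [cons_swap02 a b, cons_swap02 a' b']
      exact GG_perm _ _ _ _ _
    rw [Finset.sum_congr rfl fun e _ => this e, ← Finset.mul_sum, mul_assoc, ih,
      show n + 1 + 2 = (n + 2) + 1 by ring, KK_succ d (n+2)]
    push_cast
    ring

theorem GG_tr (d k : ℕ) : (GG d k).trace = (KK d k : ℂ) := by
  induction k with
  | zero => simp [Matrix.trace, GG, KK]
  | succ k ih =>
    simp only [Matrix.trace, Matrix.diag_apply] at ih ⊢
    rw [sum_cons, Finset.sum_comm]
    simp_rw [GG_trace]
    rw [← Finset.mul_sum, ih, KK_succ]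
    push_cast
    ring

theorem vnEntropy_flat_s15 {ι : Type*} [Fintype ι] [DecidableEq ι] (ρ : Matrix ι ι ℂ)
    (h : ρ.IsHermitian) (q : ℝ) (hsq : ρ * ρ = (q : ℂ) • ρ) (ht : ρ.trace = 1) :
    vnEntropy ρ = - Real.logb 2 q := by
  have hs : ∑ i, h.eigenvalues i = 1 := by
    have := h.trace_eq_sum_eigenvalues
    rw [ht] at this
    have h2 : (1 : ℂ) = ((∑ i, h.eigenvalues i : ℝ) : ℂ) := by
      rw [this]; push_cast; rfl
    exact_mod_cast h2.symm
  have he : ∀ i, h.eigenvalues i = 0 ∨ h.eigenvalues i = q := by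
    intro i
    have h1 := h.mulVec_eigenvectorBasis i
    set v := WithLp.ofLp (h.eigenvectorBasis i) with hv
    set l := h.eigenvalues i
    have hv0 : v ≠ 0 := by
      intro h0
      apply (h.eigenvectorBasis.orthonormal.ne_zero i)
      ext j
      exact congrFun h0 j
    have h2 : (ρ * ρ).mulVec v = (q : ℂ) • ρ.mulVec v := by
      rw [hsq, Matrix.smul_mulVec]
    rw [← Matrix.mulVec_mulVec, h1, Matrix.mulVec_smul, h1] at h2
    obtain ⟨j, hj⟩ := Function.ne_iff.1 hv0
    have h3 := congrFun h2 j
    simp only [Pi.smul_apply, Complex.real_smul, smul_eq_mul, Pi.zero_apply] at h3 hj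
    have h4 : (l : ℂ) * (l - q) = 0 := by
      apply mul_right_cancel₀ hj
      linear_combination h3
    rcases mul_eq_zero.1 h4 with h5 | h5
    · left; exact_mod_cast h5
    · right; exact_mod_cast sub_eq_zero.1 h5
  rw [vnEntropy, dif_pos h]
  congr 1
  rw [← one_mul (Real.logb 2 q), ← hs, Finset.sum_mul]
  refine Finset.sum_congr rfl fun i _ => ?_
  rcases he i with h0 | h0 <;> simp [h0]

theorem flat_props {ι : Type*} [Fintype ι] [DecidableEq ι] (d k : ℕ) (hk : k ≤ d)
    (φ : ι ≃ (Fin k → Fin d)) (ρ : Matrix ι ι ℂ)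
    (hρ : ∀ x y, ρ x y = ((KK d k)⁻¹ : ℝ) * GG d k (φ x) (φ y)) :
    ρ.PosSemidef ∧ ρ.trace = 1 ∧ vnEntropy ρ = - Real.logb 2 (k.factorial / KK d k) := by
  have hK := KK_pos d k hk
  have hKc : (KK d k : ℂ) ≠ 0 := by exact_mod_cast hK.ne'
  have e : ρ = (((KK d k)⁻¹ : ℝ) : ℂ) • (GG d k).submatrix φ φ := by
    ext x y; simp [hρ]
  have hh : ρ.IsHermitian := by
    ext x y
    rw [Matrix.conjTranspose_apply, hρ, hρ, star_mul', (GG_herm d k).apply]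
    simp
  have hsq : ρ * ρ = ((k.factorial / KK d k : ℝ) : ℂ) • ρ := by
    rw [e, Matrix.smul_mul, Matrix.mul_smul, Matrix.submatrix_mul_equiv, GG_sq, smul_smul, smul_smul]
    ext x y
    simp
    ring
  have ht : ρ.trace = 1 := by
    have := φ.sum_comp (fun f => GG d k f f)
    have h2 := GG_tr d k
    simp only [Matrix.trace, Matrix.diag_apply] at h2 ⊢
    simp_rw [hρ]
    rw [← Finset.mul_sum, this, h2]
    push_cast
    field_simp
  refine ⟨?_, ht, vnEntropy_flat_s15 ρ hh _ hsq ht⟩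
  have hq : 0 < (k.factorial / KK d k : ℝ) := by positivity
  have : ρ = (((k.factorial / KK d k : ℝ)⁻¹ : ℝ) : ℂ) • (ρ.conjTranspose * ρ) := by
    rw [hh.eq, hsq, smul_smul, ← Complex.ofReal_mul, inv_mul_cancel₀ hq.ne']
    simp
  rw [this]
  apply (Matrix.posSemidef_conjTranspose_mul_self ρ).smul
  exact_mod_cast (inv_pos.2 hq).le

theorem Esq_main (d n : ℕ) (hn : n + 2 ≤ d) :
    Esq (antisymState d) ≤
      (1/2) * Real.logb 2 (((n : ℝ) + 2) / (d - n - 1) * ((d - n) / (n + 1))) := by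
  have hn' : (n : ℝ) + 2 ≤ d := by exact_mod_cast hn
  have hp1 : (0 : ℝ) < d - n - 1 := by linarith
  have hp2 : (0 : ℝ) < d - n := by linarith
  have hp3 : (0 : ℝ) < n + 1 := by positivity
  have hp4 : (0 : ℝ) < n + 2 := by positivity
  unfold Esq
  set S := {x : ℝ | ∃ (m : ℕ) (σ : Matrix ((Fin d × Fin d) × Fin m) ((Fin d × Fin d) × Fin m) ℂ),
    σ.PosSemidef ∧ σ.trace = 1 ∧ ptraceSnd σ = antisymState d ∧ x = (1 / 2) * condMutInfo σ} with hS
  by_cases hb : BddBelow S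
  swap
  · rw [Real.sInf_of_not_bddBelow hb]
    apply mul_nonneg (by norm_num)
    apply Real.logb_nonneg (by norm_num)
    rw [div_mul_div_comm, le_div_iff₀ (by positivity)]
    nlinarith
  apply csInf_le hb
  let ε : Fin (Fintype.card (Fin n → Fin d)) ≃ (Fin n → Fin d) := (Fintype.equivFin _).symm
  let φ1 : Fin d × Fin (Fintype.card (Fin n → Fin d)) ≃ (Fin (n+1) → Fin d) :=
    (Equiv.prodCongr (Equiv.refl _) ε).trans (Fin.consEquiv (fun _ => Fin d))
  let φ2 : (Fin d × Fin d) × Fin (Fintype.card (Fin n → Fin d)) ≃ (Fin (n+2) → Fin d) :=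
    ((Equiv.prodAssoc _ _ _).trans (Equiv.prodCongr (Equiv.refl _) φ1)).trans
      (Fin.consEquiv (fun _ => Fin d))
  have hφ1 : ∀ a e, φ1 (a, e) = Fin.cons a (ε e) := fun _ _ => rfl
  have hφ2 : ∀ a b e, φ2 ((a, b), e) = Fin.cons a (Fin.cons b (ε e) : Fin (n+1) → Fin d) :=
    fun _ _ _ => rfl
  have hK0 := KK_pos d n (by omega)
  have hK1 := KK_pos d (n+1) (by omega)
  have hK2 := KK_pos d (n+2) hn
  have s0 := KK_succ d n
  have s1 := KK_succ d (n+1)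
  have c0 : (KK d n : ℂ) ≠ 0 := by exact_mod_cast hK0.ne'
  have c1 : ((d : ℂ) - n) ≠ 0 := by exact_mod_cast hp2.ne'
  have c2 : ((d : ℂ) - (n + 1)) ≠ 0 := by
    have : ((d : ℝ) - (n + 1)) ≠ 0 := by linarith
    exact_mod_cast this
  let σ : Matrix ((Fin d × Fin d) × Fin (Fintype.card (Fin n → Fin d)))
      ((Fin d × Fin d) × Fin (Fintype.card (Fin n → Fin d))) ℂ :=
    Matrix.of fun x y => ((KK d (n+2))⁻¹ : ℝ) * GG d (n+2) (φ2 x) (φ2 y)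
  have hσ : ∀ x y, σ x y = ((KK d (n+2))⁻¹ : ℝ) * GG d (n+2) (φ2 x) (φ2 y) := fun _ _ => rfl
  obtain ⟨P, T, E2⟩ := flat_props d (n+2) hn φ2 σ hσ
  have htrA : ∀ (p q : Fin d × Fin (Fintype.card (Fin n → Fin d))),
      ∑ a, σ ((a, p.1), p.2) ((a, q.1), q.2) =
      ((KK d (n+1))⁻¹ : ℝ) * GG d (n+1) (φ1 p) (φ1 q) := by
    rintro ⟨b, e⟩ ⟨b', e'⟩
    simp_rw [hσ, hφ2, hφ1]
    rw [← Finset.mul_sum, GG_trace, s1, s0]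
    push_cast
    field_simp
  have htrB : ∀ (p q : Fin d × Fin (Fintype.card (Fin n → Fin d))),
      ∑ b, σ ((p.1, b), p.2) ((q.1, b), q.2) =
      ((KK d (n+1))⁻¹ : ℝ) * GG d (n+1) (φ1 p) (φ1 q) := by
    intro p q
    rw [← htrA]
    refine Finset.sum_congr rfl fun b _ => ?_
    rw [hσ, hσ, hφ2, hφ2, hφ2, hφ2, GG_swap]
  have htrAB : ∀ (e e' : Fin (Fintype.card (Fin n → Fin d))),
      ∑ a, ∑ b, σ ((a, b), e) ((a, b), e') =
      ((KK d n)⁻¹ : ℝ) * GG d n (ε e) (ε e') := by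
    intro e e'
    rw [Finset.sum_comm]
    have : ∀ b, ∑ a, σ ((a, b), e) ((a, b), e') =
      ((KK d (n+1))⁻¹ : ℝ) * GG d (n+1) (Fin.cons b (ε e)) (Fin.cons b (ε e')) :=
      fun b => htrA (b, e) (b, e')
    simp_rw [this]
    rw [← Finset.mul_sum, GG_trace, s0]
    push_cast
    field_simp
  refine ⟨_, σ, P, T, ?_, ?_⟩
  · ext ⟨a, b⟩ ⟨a', b'⟩
    simp only [ptraceSnd, Matrix.of_apply, antisymState, asymProj, Matrix.smul_apply, smul_eq_mul]
    simp_rw [hσ, hφ2]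
    rw [← Finset.mul_sum, ε.sum_comp (fun e => GG d (n+2)
      (Fin.cons a (Fin.cons b e : Fin (n+1) → Fin d))
      (Fin.cons a' (Fin.cons b' e : Fin (n+1) → Fin d)))]
    have hf := GG_full d n a b a' b'
    have hc : (KK d 2 : ℂ) = 2 * (d.choose 2 : ℂ) := by
      rw [Nat.cast_choose_two]
      simp [KK, Finset.prod_range_succ]
      ring
    have hc0 : (d.choose 2 : ℂ) ≠ 0 := by
      exact_mod_cast (Nat.choose_pos (by omega)).ne'
    have hc2 : (KK d (n+2) : ℂ) ≠ 0 := by exact_mod_cast hK2.ne'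
    rw [hc] at hf
    apply mul_right_cancel₀ (b := 2 * (d.choose 2 : ℂ)) (by simpa using hc0)
    rw [mul_assoc, hf]
    push_cast
    field_simp
  · congr 1
    unfold condMutInfo
    have EB := (flat_props d (n+1) (by omega) φ1 (Matrix.of fun p q => ∑ b, σ ((p.1, b), p.2) ((q.1, b), q.2)) htrB).2.2
    have EA := (flat_props d (n+1) (by omega) φ1 (Matrix.of fun p q => ∑ a, σ ((a, p.1), p.2) ((a, q.1), q.2)) htrA).2.2
    have EE := (flat_props d n (by omega) ε (Matrix.of fun e e' => ∑ a, ∑ b, σ ((a, b), e) ((a, b), e')) htrAB).2.2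
    rw [EB, EA, EE, E2]
    have f0 : (0 : ℝ) < n.factorial := by positivity
    have f1 : (0 : ℝ) < (n+1).factorial := by positivity
    have f2 : (0 : ℝ) < (n+2).factorial := by positivity
    have key : ((n : ℝ) + 2) / (d - n - 1) * ((d - n) / (n + 1)) =
        ((n+2).factorial / KK d (n+2)) * (n.factorial / KK d n) /
        (((n+1).factorial / KK d (n+1)) * ((n+1).factorial / KK d (n+1))) := by
      rw [s1, s0, Nat.factorial_succ (n+1), Nat.factorial_succ n]
      have : (d : ℝ) - ((n : ℝ) + 1) ≠ 0 := by linarith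
      have h' : (d : ℝ) - n - 1 = (d : ℝ) - ((n : ℝ) + 1) := by ring
      rw [h']
      push_cast
      field_simp
      ring
    rw [key, Real.logb_div (by positivity) (by positivity), Real.logb_mul (by positivity) (by positivity),
      Real.logb_mul (by positivity) (by positivity)]
    ring

/-- for every integer `d ≥ 2`, the squashed entanglement of the
antisymmetric state satisfies `E_sq(α_d) ≤ log₂((d+2)/d)` for even `d` and
`E_sq(α_d) ≤ (1/2) log₂((d+3)/(d-1))` for odd `d`. -/
theorem Esq_antisymState_le (d : ℕ) (hd : 2 ≤ d) :
    (Even d → Esq (antisymState d) ≤ Real.logb 2 (((d : ℝ) + 2) / d)) ∧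
    (Odd d → Esq (antisymState d) ≤
      (1 / 2) * Real.logb 2 (((d : ℝ) + 3) / ((d : ℝ) - 1))) := by
  constructor
  · rintro ⟨m, hm⟩
    obtain ⟨n, rfl⟩ : ∃ n, m = n + 1 := ⟨m - 1, by omega⟩
    refine (Esq_main d n (by omega)).trans (le_of_eq ?_)
    have hdR : (d : ℝ) = 2 * n + 2 := by rw [hm]; push_cast; ring
    have hp : (0 : ℝ) < n + 1 := by positivity
    have : ((n : ℝ) + 2) / (d - n - 1) * ((d - n) / (n + 1)) = (((d : ℝ) + 2) / d) ^ 2 := by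
      rw [hdR, show (2 * n + 2 - n - 1 : ℝ) = n + 1 by ring]
      field_simp
      ring
    rw [this, Real.logb_pow]
    push_cast
    ring
  · rintro ⟨m, hm⟩
    obtain ⟨n, rfl⟩ : ∃ n, m = n + 1 := ⟨m - 1, by omega⟩
    refine (Esq_main d n (by omega)).trans (le_of_eq ?_)
    have hdR : (d : ℝ) = 2 * n + 3 := by rw [hm]; push_cast; ring
    congr 2
    have hp : (0 : ℝ) < n + 1 := by positivity
    have hp : (0 : ℝ) < n + 2 := by positivity
    rw [hdR, show (2 * n + 3 - n - 1 : ℝ) = n + 2 by ring, show (2 * n + 3 - 1 : ℝ) = 2 * (n + 1) by ring]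
    field_simp
    ring

end
end
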